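/- Let μ be a probability measure whose density ρ lies in 𝒟_L for some L > 0, and let 0 ≤ s ≤ t ≤ 1. (i) If A ∈ C^∞(ℝ), then ∫ A(ζₙ(x,s))·(ζₙ(x,t) − ζₙ(x,s)) dμ(x) − (∫ A(ζₙ(x,s)) dμ(x))·(∫ (ζₙ(x,t) − ζₙ(x,s)) dμ(x)) → 0 as n → ∞. (ii) If A ∈ C_c^∞(ℝ) and q ∈ {1,2}, then ∫ A(ξₙ(x,s))·(ξₙ(x,t) − ξₙ(x,s))^q dμ(x) − (∫ A(ξₙ(x,s)) dμ(x))·(∫ (ξₙ(x,t) − ξₙ(x,s))^q dμ(x)) → 0 as n → ∞. -/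

import Mathlib

open MeasureTheory Filter Topology Set UniformConvergence

noncomputable section

instance : Fact ((0:ℝ) < 1) := ⟨zero_lt_one⟩

/-- The circle `𝕊 = ℝ/ℤ`. -/
abbrev Circle1 : Type := AddCircle (1 : ℝ)

/-- A `C²` expanding circle map with expansion `≥ lam` and `‖T''‖_∞ ≤ Astar`,
encoded by a lift `F : ℝ → ℝ` satisfying `F (x+1) = F x + deg`. -/
structure CM (lam Astar : ℝ) where
  F : ℝ → ℝ
  deg : ℤ
  lift_add_one : ∀ x : ℝ, F (x + 1) = F x + deg
  contDiff : ContDiff ℝ 2 F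
  expanding : ∀ x : ℝ, lam ≤ deriv F x
  second_bound : ∀ x : ℝ, |deriv (deriv F) x| ≤ Astar

namespace CM

variable {lam Astar : ℝ}

/-- The induced map on the circle. -/
def toMap (T : CM lam Astar) : Circle1 → Circle1 :=
  fun x => (↑(T.F ((AddCircle.equivIco 1 0 x : ℝ))) : Circle1)

/-- The derivative of `T`, as a function on the circle. -/
def dmap (T : CM lam Astar) : Circle1 → ℝ :=
  fun x => deriv T.F ((AddCircle.equivIco 1 0 x : ℝ))

end CM

/-- The `C¹` distance on the space of maps. -/
def dC1 {lam Astar : ℝ} (T₁ T₂ : CM lam Astar) : ℝ :=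
  (⨆ x : Circle1, dist (T₁.toMap x) (T₂.toMap x)) + (⨆ x : Circle1, |T₁.dmap x - T₂.dmap x|)

/-- The transfer operator `ℒ_T h (x) = ∑_{T y = x} h y / T' y`. -/
def transfer {lam Astar : ℝ} (T : CM lam Astar) (h : Circle1 → ℝ) : Circle1 → ℝ :=
  fun x => ∑' y : {y : Circle1 // T.toMap y = x}, h y / T.dmap y

/-- Iterated transfer operators `ℒ_k ⋯ ℒ_1` of the sequence `T_1, T_2, …` (`Ts i = T_i`). -/
def transferIter {lam Astar : ℝ} (Ts : ℕ → CM lam Astar) : ℕ → (Circle1 → ℝ) → (Circle1 → ℝ)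
  | 0, h => h
  | (k+1), h => transfer (Ts (k+1)) (transferIter Ts k h)

/-- Composition `T_k ∘ ⋯ ∘ T_1` as circle maps. -/
def mapIter {lam Astar : ℝ} (Ts : ℕ → CM lam Astar) : ℕ → Circle1 → Circle1
  | 0 => id
  | (k+1) => (Ts (k+1)).toMap ∘ mapIter Ts k

/-- Composition of the lifts `F_k ∘ ⋯ ∘ F_1`. -/
def liftIter {lam Astar : ℝ} (Ts : ℕ → CM lam Astar) : ℕ → ℝ → ℝ
  | 0 => id
  | (k+1) => (Ts (k+1)).F ∘ liftIter Ts k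

/-- A real representative of `z`. -/
def zrep (z : Circle1) : ℝ := (AddCircle.equivIco 1 0 z : ℝ)

/-- The coordinate on the cut circle `J_z = 𝕊 ∖ {z}`. -/
def arcCoord (z x : Circle1) : ℝ := ((AddCircle.equivIoc 1 (zrep z) x : ℝ))

/-- `|x − y|_z`: the length of the subarc of `J_z` connecting `x` and `y`. -/
def arcDist (z x y : Circle1) : ℝ := |arcCoord z x - arcCoord z y|

/-- `g` is Lipschitz on `J_z = 𝕊 ∖ {z}` with constant `L`. -/
def LipOnArc (z : Circle1) (L : ℝ) (g : Circle1 → ℝ) : Prop :=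
  ∀ x y : Circle1, x ≠ z → y ≠ z → |g x - g y| ≤ L * arcDist z x y

/-- A probability density w.r.t. the Haar–Lebesgue measure `𝔪` on the circle. -/
def IsProbDensity (ψ : Circle1 → ℝ) : Prop :=
  Integrable ψ volume ∧ (∫ x : Circle1, ψ x) = 1 ∧ ∀ x, 0 ≤ ψ x

/-- The class `𝒟_L`: positive probability densities whose logarithm is Lipschitz
with constant `L` on `J_z` for some `z`. -/
def memD (L : ℝ) (ψ : Circle1 → ℝ) : Prop :=
  IsProbDensity ψ ∧ (∀ x, 0 < ψ x) ∧ ∃ z : Circle1, LipOnArc z L (fun x => Real.log (ψ x))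

/-- The `L¹(𝔪)` norm. -/
def l1norm (h : Circle1 → ℝ) : ℝ := ∫ x : Circle1, |h x|

/-- The supremum norm. -/
def supNorm (h : Circle1 → ℝ) : ℝ := ⨆ x : Circle1, |h x|

/-- The Lipschitz constant of `h` (w.r.t. the metric of the circle). -/
def lipConst (h : Circle1 → ℝ) : ℝ :=
  sInf {L : ℝ | 0 ≤ L ∧ ∀ x y : Circle1, |h x - h y| ≤ L * dist x y}

/-- The Lipschitz norm `‖h‖_Lip = Lip(h) + ‖h‖_∞`. -/
def lipNorm (h : Circle1 → ℝ) : ℝ := lipConst h + supNorm h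

/-- `ρ` is the density of the SRB measure of `T`: the density of a `T`-invariant
probability measure equivalent to `𝔪`. -/
def IsSRBDensity {lam Astar : ℝ} (T : CM lam Astar) (ρ : Circle1 → ℝ) : Prop :=
  IsProbDensity ρ ∧ (∀ᵐ x : Circle1, 0 < ρ x) ∧
    Measure.map T.toMap (volume.withDensity (fun x => ENNReal.ofReal (ρ x))) =
      volume.withDensity (fun x => ENNReal.ofReal (ρ x))

section QDS

variable {lam Astar : ℝ}

/-- `x_{n,k} = T_{n,k} ∘ ⋯ ∘ T_{n,1}` for a triangular array. -/
def arrIter (Tarr : ℕ → ℕ → CM lam Astar) (n : ℕ) : ℕ → Circle1 → Circle1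
  | 0 => id
  | (k+1) => (Tarr n (k+1)).toMap ∘ arrIter Tarr n k

/-- `ℒ_{n,k} ⋯ ℒ_{n,1}` for a triangular array. -/
def arrTransfer (Tarr : ℕ → ℕ → CM lam Astar) (n : ℕ) : ℕ → (Circle1 → ℝ) → (Circle1 → ℝ)
  | 0, h => h
  | (k+1), h => transfer (Tarr n (k+1)) (arrTransfer Tarr n k h)

/-- `f_{n,k} = f ∘ T_{n,k} ∘ ⋯ ∘ T_{n,1}` evaluated at `x`. -/
def fnk (Tarr : ℕ → ℕ → CM lam Astar) (f : Circle1 → ℝ) (n k : ℕ) (x : Circle1) : ℝ :=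
  f (arrIter Tarr n k x)

/-- `ζₙ(x,t) = n⁻¹ (∑_{k<⌊nt⌋} f_{n,k}(x) + {nt}·f_{n,⌊nt⌋}(x))`. -/
def zetaP (Tarr : ℕ → ℕ → CM lam Astar) (f : Circle1 → ℝ) (n : ℕ) (x : Circle1) (t : ℝ) : ℝ :=
  (n : ℝ)⁻¹ * ((∑ k ∈ Finset.range ⌊(n : ℝ) * t⌋₊, fnk Tarr f n k x) +
    Int.fract ((n : ℝ) * t) * fnk Tarr f n ⌊(n : ℝ) * t⌋₊ x)

/-- `ξₙ(x,t) = √n ζₙ(x,t) − √n μ(ζₙ(·,t))` for a measure `μ`. -/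
def xiP (Tarr : ℕ → ℕ → CM lam Astar) (f : Circle1 → ℝ) (μ : Measure Circle1) (n : ℕ)
    (x : Circle1) (t : ℝ) : ℝ :=
  Real.sqrt n * zetaP Tarr f n x t - Real.sqrt n * ∫ y, zetaP Tarr f n y t ∂μ

/-- The Hölder continuity (exponent `η`) of the curve `γ` on `[0,1]`, w.r.t. `d_{C¹}`. -/
def HolderCurve (η : ℝ) (γ : ℝ → CM lam Astar) : Prop :=
  ∃ H : ℝ, ∀ s ∈ Icc (0:ℝ) 1, ∀ t ∈ Icc (0:ℝ) 1, dC1 (γ s) (γ t) ≤ H * |s - t| ^ η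

/-- The convergence-rate condition `sup_n n^η sup_t d_{C¹}(T_{n,⌊nt⌋}, γ_t) < ∞`. -/
def ArrayApprox (η : ℝ) (γ : ℝ → CM lam Astar) (Tarr : ℕ → ℕ → CM lam Astar) : Prop :=
  ∃ M : ℝ, ∀ n : ℕ, 1 ≤ n → ∀ t ∈ Icc (0:ℝ) 1,
    (n : ℝ) ^ η * dC1 (Tarr n ⌊(n : ℝ) * t⌋₊) (γ t) ≤ M

end QDS

/-- The path space: functions `[0,1] → ℝ` with the topology of uniform convergence;
continuous paths (with the supremum metric) embed isometrically. -/
abbrev PathSpace : Type := (Icc (0:ℝ) 1) →ᵤ ℝ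

instance : MeasurableSpace PathSpace := borel PathSpace

/-- A function `[0,1] → ℝ` (given as a function on `ℝ`) as a point of the path space. -/
def pathOf (g : ℝ → ℝ) : PathSpace := UniformFun.ofFun (fun t => g t)

/-- Evaluation of a path at time `t` (clamped to `[0,1]`). -/
def evalPath (t : ℝ) (ω : PathSpace) : ℝ := UniformFun.toFun ω (projIcc 0 1 zero_le_one t)


section Extra

variable {lam Astar : ℝ}

/-- `μ(ζₙ(·,t))` for the measure with density `ρ` w.r.t. `𝔪`. -/
def zetaMean (Tarr : ℕ → ℕ → CM lam Astar) (f : Circle1 → ℝ) (ρ : Circle1 → ℝ)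
    (n : ℕ) (t : ℝ) : ℝ :=
  ∫ y : Circle1, zetaP Tarr f n y t * ρ y

/-- `𝔪(ζₙ(·,t))`, the mean w.r.t. the Lebesgue measure. -/
def zetaMeanM (Tarr : ℕ → ℕ → CM lam Astar) (f : Circle1 → ℝ) (n : ℕ) (t : ℝ) : ℝ :=
  ∫ y : Circle1, zetaP Tarr f n y t

/-- `ξₙ(x,t) = √n ζₙ(x,t) − √n μ(ζₙ(·,t))`, where `μ` has density `ρ`. -/
def xiD (Tarr : ℕ → ℕ → CM lam Astar) (f : Circle1 → ℝ) (ρ : Circle1 → ℝ)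
    (n : ℕ) (x : Circle1) (t : ℝ) : ℝ :=
  Real.sqrt n * zetaP Tarr f n x t - Real.sqrt n * zetaMean Tarr f ρ n t

end Extra

/-- The σ-algebra `𝔉_t` on the path space, generated by the evaluations at times `s ∈ [0,t]`. -/
def pathFiltration (t : ℝ) : MeasurableSpace PathSpace :=
  ⨆ (s : ℝ) (_ : 0 ≤ s ∧ s ≤ t), MeasurableSpace.comap (evalPath s) (borel ℝ)

/-- The process `M_t(ω) = A(ω(t)) − A(ω(0)) − ½∫₀ᵗ σ̂ₛ²·A''(ω(s)) ds`. -/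
def MGproc (σ2 : ℝ → ℝ) (A : ℝ → ℝ) (t : ℝ) (ω : PathSpace) : ℝ :=
  A (evalPath t ω) - A (evalPath 0 ω) -
    (1/2) * ∫ s in (0:ℝ)..t, σ2 s * deriv (deriv A) (evalPath s ω)

/-- `P` solves the martingale problem on `C⁰([0,1],ℝ)` for the generator `½σ̂ₜ² d²/dx²`,
started at `0`:  `P` is a probability measure, concentrated on continuous paths starting at `0`,
and for every `A ∈ C_c^∞(ℝ)` the process `MGproc σ2 A` is a `P`-martingale w.r.t. the
natural filtration `𝔉_t`.  -/
def SolvesMartingaleProblem (σ2 : ℝ → ℝ) (P : Measure PathSpace) : Prop :=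
  IsProbabilityMeasure P ∧
  P {ω : PathSpace | evalPath 0 ω = 0} = 1 ∧
  P {ω : PathSpace | Continuous (UniformFun.toFun ω)} = 1 ∧
  ∀ A : ℝ → ℝ, ContDiff ℝ (⊤ : ℕ∞) A → HasCompactSupport A →
    (∀ t ∈ Icc (0:ℝ) 1, Integrable (MGproc σ2 A t) P) ∧
    (∀ t ∈ Icc (0:ℝ) 1, @Measurable PathSpace ℝ (pathFiltration t) _ (MGproc σ2 A t)) ∧
    (∀ s ∈ Icc (0:ℝ) 1, ∀ t ∈ Icc (0:ℝ) 1, s ≤ t →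
      P[MGproc σ2 A t | pathFiltration s] =ᵐ[P] MGproc σ2 A s)

end

/-!
The transfer operator of an expanding map contracts the Lipschitz constant of the logarithm of a
density, up to a bounded distortion. Two densities of the same mass with this regularity share a
constant part, which cancels in their difference, so that they become indistinguishable for
observables of the distant future, exponentially fast.

An observable `g` which depends smoothly on the orbit up to time `k` may be treated as a density:
for a large constant `c`, the density `(g + c) ρ` is regular once it is transported to time `k`.
Hence `g` decorrelates exponentially fast from everything that happens after time `k`. Now
`A (ζₙ s)` and `A (ξₙ s)`, with `k = ⌊n s⌋`, are such observables with bounds uniform in `n`: by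
expansion the dependence on the orbit up to time `k` is a geometric series. The increments over
`[s, t]` are `n⁻¹`, resp. `n ^ (-1/2)`, times a sum of later observables, and each covariance is
again dominated by a geometric series. In the square of the increment of `ξₙ` the summands are
products of two centred observables at times `k + i ≤ k + i + d`, and the covariance is small as
soon as one of the gaps `i` and `d` is large.
-/

section Decorrelation

open ProbabilityTheory

variable {lam Astar : ℝ}

/-! ### Circle maps and their lifts -/

theorem circle1_coe_add_intCast (x : ℝ) (m : ℤ) : ((x + m : ℝ) : Circle1) = x := by
  rw [AddCircle.coe_add, add_eq_left, AddCircle.coe_eq_zero_iff]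
  exact ⟨m, by simp⟩

theorem mul_abs_sub_le_abs_image_sub_of_le_deriv {F : ℝ → ℝ} {κ : ℝ} (hF : Differentiable ℝ F)
    (hκ : ∀ x, κ ≤ deriv F x) (x y : ℝ) : κ * |x - y| ≤ |F x - F y| := by
  wlog hxy : y ≤ x generalizing x y
  · rw [abs_sub_comm x, abs_sub_comm (F x)]
    exact this y x (le_of_not_ge hxy)
  rw [abs_of_nonneg (sub_nonneg.2 hxy)]
  exact (mul_sub_le_image_sub_of_le_deriv hF hκ hxy).trans (le_abs_self _)

namespace CM

variable (T : CM lam Astar)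

theorem Astar_nonneg (T : CM lam Astar) : 0 ≤ Astar :=
  (abs_nonneg _).trans (T.second_bound 0)

theorem differentiable : Differentiable ℝ T.F :=
  T.contDiff.differentiable (by norm_num)

theorem contDiff_deriv : ContDiff ℝ 1 (deriv T.F) :=
  T.contDiff.deriv' (n := 1)

theorem mul_abs_sub_le (x y : ℝ) : lam * |x - y| ≤ |T.F x - T.F y| :=
  mul_abs_sub_le_abs_image_sub_of_le_deriv T.differentiable T.expanding x y

theorem F_add_intCast (x : ℝ) (j : ℤ) : T.F (x + j) = T.F x + (j * T.deg : ℤ) := by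
  simpa using AddConstMapClass.map_add_int' (⟨T.F, T.lift_add_one⟩ : AddConstMap ℝ ℝ 1 T.deg) x j

theorem toMap_coe (x : ℝ) : T.toMap (x : Circle1) = (T.F x : Circle1) := by
  have hfract : Int.fract x = x + (-⌊x⌋ : ℤ) := by
    push_cast; exact (Int.self_sub_floor x).symm ▸ sub_eq_add_neg _ _
  rw [toMap, AddCircle.coe_equivIco_mk_apply, div_one, mul_one, hfract, T.F_add_intCast,
    circle1_coe_add_intCast]

theorem continuous_toMap : Continuous T.toMap := by
  refine isQuotientMap_quotient_mk'.continuous_iff.2 ?_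
  refine ((AddCircle.continuous_mk' 1).comp T.differentiable.continuous).congr fun x => ?_
  exact (T.toMap_coe x).symm

end CM

theorem arrIter_eq_mapIter (Tarr : ℕ → ℕ → CM lam Astar) (n k : ℕ) :
    arrIter Tarr n k = mapIter (Tarr n) k := by
  induction k with
  | zero => rfl
  | succ k ih => rw [arrIter, mapIter, ih]

variable (Ts : ℕ → CM lam Astar)

theorem mapIter_coe (k : ℕ) (x : ℝ) : mapIter Ts k (x : Circle1) = (liftIter Ts k x : Circle1) := by
  induction k with
  | zero => rfl
  | succ k ih => rw [mapIter, liftIter, Function.comp_apply, ih, CM.toMap_coe, Function.comp_apply]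

theorem mapIter_add (j k : ℕ) :
    mapIter Ts (j + k) = mapIter (fun i => Ts (i + k)) j ∘ mapIter Ts k := by
  induction j with
  | zero => rw [Nat.zero_add]; rfl
  | succ j ih => rw [Nat.add_right_comm, mapIter, ih, Nat.add_right_comm]; rfl

theorem liftIter_add (j k : ℕ) :
    liftIter Ts (j + k) = liftIter (fun i => Ts (i + k)) j ∘ liftIter Ts k := by
  induction j with
  | zero => rw [Nat.zero_add]; rfl
  | succ j ih => rw [Nat.add_right_comm, liftIter, ih, Nat.add_right_comm]; rfl

theorem continuous_mapIter (k : ℕ) : Continuous (mapIter Ts k) := by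
  induction k with
  | zero => exact continuous_id
  | succ k ih => exact (Ts (k + 1)).continuous_toMap.comp ih

theorem continuous_liftIter (k : ℕ) : Continuous (liftIter Ts k) := by
  induction k with
  | zero => exact continuous_id
  | succ k ih => exact (Ts (k + 1)).differentiable.continuous.comp ih

theorem pow_mul_abs_liftIter_sub_le (hlam : 0 ≤ lam) (k j : ℕ) (x y : ℝ) :
    lam ^ j * |liftIter Ts k x - liftIter Ts k y| ≤
      |liftIter Ts (k + j) x - liftIter Ts (k + j) y| := by
  induction j with
  | zero => simp
  | succ j ih =>
    calc lam ^ (j + 1) * |liftIter Ts k x - liftIter Ts k y|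
        = lam * (lam ^ j * |liftIter Ts k x - liftIter Ts k y|) := by ring
      _ ≤ lam * |liftIter Ts (k + j) x - liftIter Ts (k + j) y| := by gcongr
      _ ≤ _ := (Ts (k + j + 1)).mul_abs_sub_le _ _

theorem exists_liftIter_add_intCast (k : ℕ) (j : ℤ) :
    ∃ d : ℤ, ∀ x, liftIter Ts k (x + j) = liftIter Ts k x + d := by
  induction k with
  | zero => exact ⟨j, fun x => rfl⟩
  | succ k ih =>
    obtain ⟨d, hd⟩ := ih
    exact ⟨d * (Ts (k + 1)).deg, fun x => by
      rw [liftIter, Function.comp_apply, hd, CM.F_add_intCast, Function.comp_apply]⟩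

theorem liftIter_add_intCast_sub (k : ℕ) (j : ℤ) (x y : ℝ) :
    liftIter Ts k (x + j) - liftIter Ts k (y + j) = liftIter Ts k x - liftIter Ts k y := by
  obtain ⟨d, hd⟩ := exists_liftIter_add_intCast Ts k j
  rw [hd, hd, add_sub_add_right_eq_sub]

/-! ### Transfer operators -/

theorem intervalIntegrable_of_integrableOn_Ioo_natCast {g : ℝ → ℝ} {a : ℝ} {d : ℕ}
    (hg : IntegrableOn g (Ioo a (a + d))) {j : ℕ} (hj : j < d) :
    IntervalIntegrable g volume (a + j) (a + (j + 1 : ℕ)) := by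
  have hjd : ((j + 1 : ℕ) : ℝ) ≤ d := mod_cast hj
  have : (0 : ℝ) ≤ j := j.cast_nonneg
  rw [intervalIntegrable_iff_integrableOn_Ioo_of_le (by push_cast; linarith)]
  exact hg.mono_set (Ioo_subset_Ioo (by linarith) (by linarith))

theorem integrableOn_translate_of_integrableOn_Ioo_natCast {g : ℝ → ℝ} {a : ℝ} {d : ℕ}
    (hg : IntegrableOn g (Ioo a (a + d))) {j : ℕ} (hj : j < d) :
    IntegrableOn (fun y => g (y + j)) (Ioo a (a + 1)) := by
  have h := (intervalIntegrable_of_integrableOn_Ioo_natCast hg hj).comp_add_right j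
  rw [add_sub_cancel_right, Nat.cast_succ, ← add_assoc, add_right_comm, add_sub_cancel_right] at h
  exact (intervalIntegrable_iff_integrableOn_Ioo_of_le (by linarith)).1 h

theorem integrableOn_sum_translates {g : ℝ → ℝ} {a : ℝ} {d : ℕ}
    (hg : IntegrableOn g (Ioo a (a + d))) :
    IntegrableOn (fun y => ∑ j ∈ Finset.range d, g (y + j)) (Ioo a (a + 1)) :=
  integrable_finsetSum _ fun _ hj =>
    integrableOn_translate_of_integrableOn_Ioo_natCast hg (Finset.mem_range.1 hj)

theorem setIntegral_sum_translates {g : ℝ → ℝ} {a : ℝ} {d : ℕ}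
    (hg : IntegrableOn g (Ioo a (a + d))) :
    ∫ y in Ioo a (a + 1), ∑ j ∈ Finset.range d, g (y + j) = ∫ y in Ioo a (a + d), g y := by
  have htranslate (j : ℕ) :
      ∫ y in Ioo a (a + 1), g (y + j) = ∫ y in (a + j)..(a + (j + 1 : ℕ)), g y := by
    rw [← integral_Ioc_eq_integral_Ioo, ← intervalIntegral.integral_of_le (by linarith),
      intervalIntegral.integral_comp_add_right]
    push_cast
    ring_nf
  have hInt (j : ℕ) (hj : j ∈ Finset.range d) : IntegrableOn (fun y => g (y + j)) (Ioo a (a + 1)) :=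
    integrableOn_translate_of_integrableOn_Ioo_natCast hg (Finset.mem_range.1 hj)
  rw [integral_finsetSum _ hInt]
  simp only [htranslate]
  rw [intervalIntegral.sum_integral_adjacent_intervals (a := fun j : ℕ => a + j)
    fun j hj => intervalIntegrable_of_integrableOn_Ioo_natCast hg hj, Nat.cast_zero, add_zero,
    intervalIntegral.integral_of_le (by simp), integral_Ioc_eq_integral_Ioo]

namespace CM

variable (T : CM lam Astar)

/-- The density of the image of `φ(x) dx` under the lift of `T`. -/
noncomputable def liftPush (φ : ℝ → ℝ) (u : ℝ) : ℝ :=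
  φ (Function.invFun T.F u) / deriv T.F (Function.invFun T.F u)

/-- The transfer operator of `T`, as an operator from functions on an arc `(z, z + 1)` to functions
on the arc `(F z, F z + 1)`: the `deg` inverse branches of `T` are the translates of `F⁻¹`. -/
noncomputable def liftTransfer (φ : ℝ → ℝ) (y : ℝ) : ℝ :=
  ∑ j ∈ Finset.range T.deg.toNat, T.liftPush φ (y + j)

variable {T} in
theorem strictMono (hlam : 0 < lam) : StrictMono T.F :=
  strictMono_of_deriv_pos fun x => hlam.trans_le (T.expanding x)

theorem surjective (hlam : 0 < lam) : Function.Surjective T.F := by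
  have hgrow {x y : ℝ} (h : x ≤ y) : lam * (y - x) ≤ T.F y - T.F x :=
    mul_sub_le_image_sub_of_le_deriv T.differentiable T.expanding h
  refine T.differentiable.continuous.surjective ?_ ?_
  · refine tendsto_atTop_mono' _ ?_ (tendsto_atTop_add_const_right _ (T.F 0)
      (tendsto_id.const_mul_atTop hlam))
    filter_upwards [eventually_ge_atTop 0] with x hx
    simpa [le_sub_iff_add_le] using hgrow hx
  · refine tendsto_atBot_mono' _ ?_ (tendsto_atBot_add_const_right _ (T.F 0)
      (tendsto_id.const_mul_atBot hlam))
    filter_upwards [eventually_le_atBot 0] with x hx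
    have := hgrow hx
    simp only [id]
    linarith

theorem image_Ioo (hlam : 0 < lam) (a b : ℝ) : T.F '' Ioo a b = Ioo (T.F a) (T.F b) :=
  (StrictMono.orderIsoOfSurjective T.F (strictMono hlam) (T.surjective hlam)).image_Ioo a b

theorem toNat_deg (hlam : 0 < lam) : (T.deg.toNat : ℝ) = T.deg := by
  have hpos : (0 : ℝ) < T.deg := by
    have := strictMono (T := T) hlam (lt_add_one (0 : ℝ))
    rw [T.lift_add_one] at this
    linarith
  exact mod_cast Int.toNat_of_nonneg (by exact_mod_cast hpos.le)

theorem F_add_one (hlam : 0 < lam) (z : ℝ) : T.F (z + 1) = T.F z + T.deg.toNat := by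
  rw [T.lift_add_one, T.toNat_deg hlam]

theorem deriv_smul_liftPush (hlam : 0 < lam) (φ : ℝ → ℝ) (x : ℝ) :
    deriv T.F x • T.liftPush φ (T.F x) = φ x := by
  rw [liftPush, Function.leftInverse_invFun (strictMono hlam).injective, smul_eq_mul,
    mul_div_cancel₀ _ (hlam.trans_le (T.expanding x)).ne']

theorem integrableOn_liftPush (hlam : 0 < lam) {φ : ℝ → ℝ} {z : ℝ}
    (hφ : IntegrableOn φ (Ioo z (z + 1))) :
    IntegrableOn (T.liftPush φ) (Ioo (T.F z) (T.F z + T.deg.toNat)) := by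
  rw [← T.F_add_one hlam, ← T.image_Ioo hlam,
    integrableOn_image_iff_integrableOn_deriv_smul_of_monotoneOn measurableSet_Ioo
      (fun x _ => (T.differentiable x).hasDerivAt.hasDerivWithinAt)
      ((strictMono hlam).monotone.monotoneOn _)]
  simpa only [T.deriv_smul_liftPush hlam] using hφ

theorem setIntegral_liftPush (hlam : 0 < lam) (φ : ℝ → ℝ) (z : ℝ) :
    ∫ u in Ioo (T.F z) (T.F z + T.deg.toNat), T.liftPush φ u = ∫ x in Ioo z (z + 1), φ x := by
  rw [← T.F_add_one hlam, ← T.image_Ioo hlam,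
    integral_image_eq_integral_deriv_smul_of_monotoneOn measurableSet_Ioo
      (fun x _ => (T.differentiable x).hasDerivAt.hasDerivWithinAt)
      ((strictMono hlam).monotone.monotoneOn _)]
  simp only [T.deriv_smul_liftPush hlam]

theorem integrableOn_liftTransfer (hlam : 0 < lam) {φ : ℝ → ℝ} {z : ℝ}
    (hφ : IntegrableOn φ (Ioo z (z + 1))) :
    IntegrableOn (T.liftTransfer φ) (Ioo (T.F z) (T.F z + 1)) :=
  integrableOn_sum_translates (T.integrableOn_liftPush hlam hφ)

theorem setIntegral_liftTransfer (hlam : 0 < lam) {φ : ℝ → ℝ} {z : ℝ}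
    (hφ : IntegrableOn φ (Ioo z (z + 1))) :
    ∫ y in Ioo (T.F z) (T.F z + 1), T.liftTransfer φ y = ∫ x in Ioo z (z + 1), φ x :=
  (setIntegral_sum_translates (T.integrableOn_liftPush hlam hφ)).trans
    (T.setIntegral_liftPush hlam φ z)

theorem liftTransfer_mul_comp_toMap (hlam : 0 < lam) (φ : ℝ → ℝ) (H : Circle1 → ℝ) (y : ℝ) :
    T.liftTransfer (fun x => φ x * H (T.toMap x)) y = T.liftTransfer φ y * H y := by
  simp only [liftTransfer, liftPush, Finset.sum_mul, T.toMap_coe,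
    Function.rightInverse_invFun (T.surjective hlam) _]
  refine Finset.sum_congr rfl fun j _ => ?_
  rw [mul_div_right_comm, ← Int.cast_natCast (R := ℝ) j, circle1_coe_add_intCast]

/-- Bounded distortion; the factor `1 + Astar |F x - F y|` that comes out is below the
exponential. -/
theorem deriv_le_exp_mul_deriv (hlam : 1 ≤ lam) (x y : ℝ) :
    deriv T.F x ≤ Real.exp (Astar * |T.F x - T.F y|) * deriv T.F y := by
  have hone (x : ℝ) : 1 ≤ deriv T.F x := hlam.trans (T.expanding x)
  have hLip : |deriv T.F x - deriv T.F y| ≤ Astar * |x - y| :=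
    convex_univ.norm_image_sub_le_of_norm_deriv_le
      (fun x _ => (T.contDiff_deriv.differentiable one_ne_zero) x) (fun x _ => T.second_bound x)
      (mem_univ y) (mem_univ x)
  have hexp : |x - y| ≤ |T.F x - T.F y| := by
    simpa using mul_abs_sub_le_abs_image_sub_of_le_deriv T.differentiable hone x y
  have hnonneg : 0 ≤ Astar * |T.F x - T.F y| := mul_nonneg T.Astar_nonneg (abs_nonneg _)
  calc deriv T.F x ≤ deriv T.F y + Astar * |x - y| := by linarith [(abs_le.1 hLip).2]
    _ ≤ deriv T.F y + Astar * |T.F x - T.F y| := by gcongr; exact T.Astar_nonneg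
    _ ≤ deriv T.F y + Astar * |T.F x - T.F y| * deriv T.F y := by
      gcongr _ + ?_; exact le_mul_of_one_le_right hnonneg (hone y)
    _ = (Astar * |T.F x - T.F y| + 1) * deriv T.F y := by ring
    _ ≤ _ := by
      gcongr
      · exact zero_le_one.trans (hone y)
      · exact Real.add_one_le_exp _

end CM

/-! ### Densities with regular logarithm -/

/-- `φ` is a nonnegative integrable function on the arc `(z, z + 1)` whose logarithm has modulus of
continuity `D`. Stated multiplicatively so that the zero function is included. -/
structure LogRegular (D : ℝ → ℝ → ℝ) (z : ℝ) (φ : ℝ → ℝ) : Prop where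
  integrableOn : IntegrableOn φ (Ioo z (z + 1))
  nonneg : ∀ x ∈ Ioo z (z + 1), 0 ≤ φ x
  le_exp_mul : ∀ x ∈ Ioo z (z + 1), ∀ y ∈ Ioo z (z + 1), φ x ≤ Real.exp (D x y) * φ y

/-- The integral of the circle observable `H` against the density `φ`, read on the arc
`(z, z + 1)`. -/
noncomputable def arcPairing (z : ℝ) (φ : ℝ → ℝ) (H : Circle1 → ℝ) : ℝ :=
  ∫ x in Ioo z (z + 1), φ x * H x

theorem abs_sub_le_one_of_mem_Ioo {x y z : ℝ} (hx : x ∈ Ioo z (z + 1)) (hy : y ∈ Ioo z (z + 1)) :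
    |x - y| ≤ 1 := by
  rw [abs_le]
  constructor <;> linarith [hx.1, hx.2, hy.1, hy.2]

theorem integrableOn_mul_circle {φ : ℝ → ℝ} {s : Set ℝ} {H : Circle1 → ℝ} {N : ℝ}
    (hφ : IntegrableOn φ s) (hH : Measurable H) (hN : ∀ x, |H x| ≤ N) :
    IntegrableOn (fun x => φ x * H x) s :=
  hφ.mul_bdd (hH.comp AddCircle.measurable_mk').aestronglyMeasurable (ae_of_all _ fun x => hN x)

namespace LogRegular

variable {D D' : ℝ → ℝ → ℝ} {z N K : ℝ} {φ : ℝ → ℝ} {H : Circle1 → ℝ}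

theorem mono (hφ : LogRegular D z φ)
    (hD : ∀ x ∈ Ioo z (z + 1), ∀ y ∈ Ioo z (z + 1), D x y ≤ D' x y) : LogRegular D' z φ where
  integrableOn := hφ.integrableOn
  nonneg := hφ.nonneg
  le_exp_mul x hx y hy := (hφ.le_exp_mul x hx y hy).trans <|
    mul_le_mul_of_nonneg_right (Real.exp_le_exp.2 (hD x hx y hy)) (hφ.nonneg y hy)

theorem const_mul {a : ℝ} (ha : 0 ≤ a) (hφ : LogRegular D z φ) :
    LogRegular D z (fun x => a * φ x) where
  integrableOn := hφ.integrableOn.const_mul a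
  nonneg x hx := mul_nonneg ha (hφ.nonneg x hx)
  le_exp_mul x hx y hy := by
    rw [mul_left_comm]
    exact mul_le_mul_of_nonneg_left (hφ.le_exp_mul x hx y hy) ha

theorem abs_arcPairing_le (hφ : LogRegular D z φ) (hH : Measurable H) (hN : ∀ x, |H x| ≤ N) :
    |arcPairing z φ H| ≤ N * ∫ x in Ioo z (z + 1), φ x := by
  rw [← integral_const_mul]
  refine (abs_integral_le_integral_abs).trans ?_
  refine setIntegral_mono_on (integrableOn_mul_circle hφ.integrableOn hH hN).abs
    (hφ.integrableOn.const_mul N) measurableSet_Ioo fun x hx => ?_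
  rw [abs_mul, abs_of_nonneg (hφ.nonneg x hx), mul_comm]
  exact mul_le_mul_of_nonneg_right (hN x) (hφ.nonneg x hx)

theorem liftTransfer (hlam : 1 ≤ lam) (T : CM lam Astar)
    (hDT : ∀ (j : ℕ) (u v : ℝ), D (u + j) (v + j) = D u v)
    (hφ : LogRegular (fun x y => D (T.F x) (T.F y)) z φ) :
    LogRegular (fun u v => Astar * |u - v| + D u v) (T.F z) (T.liftTransfer φ) := by
  have hlam0 : 0 < lam := zero_lt_one.trans_le hlam
  have hinv (u : ℝ) : T.F (Function.invFun T.F u) = u :=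
    Function.rightInverse_invFun (T.surjective hlam0) u
  have hderiv (x : ℝ) : 0 < deriv T.F x := hlam0.trans_le (T.expanding x)
  have hmem {y : ℝ} (hy : y ∈ Ioo (T.F z) (T.F z + 1)) {j : ℕ} (hj : j ∈ Finset.range T.deg.toNat) :
      Function.invFun T.F (y + j) ∈ Ioo z (z + 1) := by
    have hj' : (j : ℝ) + 1 ≤ T.deg.toNat := mod_cast Finset.mem_range.1 hj
    have := T.F_add_one hlam0 z
    constructor <;> rw [← (CM.strictMono (T := T) hlam0).lt_iff_lt, hinv] <;>
      linarith [hy.1, hy.2, (j.cast_nonneg : (0 : ℝ) ≤ j)]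
  refine ⟨T.integrableOn_liftTransfer hlam0 hφ.integrableOn, fun y hy => ?_, fun u hu v hv => ?_⟩
  · exact Finset.sum_nonneg fun j hj => div_nonneg (hφ.nonneg _ (hmem hy hj)) (hderiv _).le
  rw [CM.liftTransfer, CM.liftTransfer, Finset.mul_sum]
  refine Finset.sum_le_sum fun j hj => ?_
  set x := Function.invFun T.F (u + j) with hx
  set y := Function.invFun T.F (v + j) with hy
  have hφxy : φ x ≤ Real.exp (D u v) * φ y := by
    simpa only [hx, hy, hinv, hDT] using hφ.le_exp_mul x (hmem hu hj) y (hmem hv hj)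
  have hdist : deriv T.F y ≤ Real.exp (Astar * |u - v|) * deriv T.F x := by
    simpa only [hx, hy, hinv, add_sub_add_right_eq_sub, abs_sub_comm v]
      using T.deriv_le_exp_mul_deriv hlam y x
  calc φ x / deriv T.F x
      ≤ Real.exp (D u v) * φ y / (deriv T.F y / Real.exp (Astar * |u - v|)) := by
        gcongr
        · exact (hφ.nonneg x (hmem hu hj)).trans hφxy
        · exact div_pos (hderiv y) (Real.exp_pos _)
        · rwa [div_le_iff₀' (Real.exp_pos _)]
    _ = Real.exp (Astar * |u - v| + D u v) * (φ y / deriv T.F y) := by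
        rw [Real.exp_add]
        field_simp

theorem exp_neg_mul_integral_le (hK : 0 ≤ K) (hφ : LogRegular (fun x y => K * |x - y|) z φ)
    {y : ℝ} (hy : y ∈ Ioo z (z + 1)) : Real.exp (-K) * ∫ x in Ioo z (z + 1), φ x ≤ φ y := by
  rw [Real.exp_neg, inv_mul_le_iff₀ (Real.exp_pos _)]
  calc ∫ x in Ioo z (z + 1), φ x ≤ ∫ _ in Ioo z (z + 1), Real.exp K * φ y := by
        refine setIntegral_mono_on hφ.integrableOn (integrable_const _) measurableSet_Ioo
          fun x hx => (hφ.le_exp_mul x hx y hy).trans ?_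
        have := hφ.nonneg y hy
        gcongr
        exact mul_le_of_le_one_right hK (abs_sub_le_one_of_mem_Ioo hx hy)
    _ = Real.exp K * φ y := by simp

end LogRegular

/-- The proportion of the mass of a density with `K`-Lipschitz logarithm that can be removed, as a
constant function, leaving a density with `K'`-Lipschitz logarithm. -/
noncomputable def removableMass (K K' : ℝ) : ℝ := Real.exp (-K) * (1 - K / K')

theorem exp_mul_sub_one_le {K K' u : ℝ} (hK : 0 ≤ K) (hKK' : K < K') :
    Real.exp (K * u) - 1 ≤ K / K' * (Real.exp (K' * u) - 1) := by
  have hK' : 0 < K' := hK.trans_lt hKK'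
  have hconv := convexOn_exp.2 (mem_univ 0) (mem_univ (K' * u))
    (sub_nonneg.2 ((div_le_one hK').2 hKK'.le)) (div_nonneg hK hK'.le) (sub_add_cancel 1 (K / K'))
  simp only [smul_eq_mul, mul_zero, zero_add, Real.exp_zero, mul_one] at hconv
  rw [← mul_assoc, div_mul_cancel₀ _ hK'.ne'] at hconv
  linarith

theorem LogRegular.sub_const {z K K' : ℝ} {φ : ℝ → ℝ} (hK : 0 ≤ K) (hKK' : K < K')
    (hφ : LogRegular (fun x y => K * |x - y|) z φ) :
    LogRegular (fun x y => K' * |x - y|) z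
      (fun x => φ x - removableMass K K' * ∫ y in Ioo z (z + 1), φ y) := by
  have hK' : 0 < K' := hK.trans_lt hKK'
  have hr0 : 0 ≤ K / K' := div_nonneg hK hK'.le
  have hr1 : 0 ≤ 1 - K / K' := sub_nonneg.2 ((div_le_one hK').2 hKK'.le)
  set c := removableMass K K' * ∫ y in Ioo z (z + 1), φ y with hc
  have hcle (y) (hy : y ∈ Ioo z (z + 1)) : c ≤ (1 - K / K') * φ y := by
    rw [hc, removableMass, mul_right_comm, mul_comm]
    exact mul_le_mul_of_nonneg_left (hφ.exp_neg_mul_integral_le hK hy) hr1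
  refine ⟨hφ.integrableOn.sub (integrable_const c), fun x hx => ?_, fun x hx y hy => ?_⟩
  · nlinarith [hcle x hx, mul_nonneg hr0 (hφ.nonneg x hx)]
  have hexp : 0 ≤ Real.exp (K' * |x - y|) - 1 :=
    sub_nonneg.2 (Real.one_le_exp (by positivity))
  have hconv := mul_le_mul_of_nonneg_right (exp_mul_sub_one_le (u := |x - y|) hK hKK')
    (hφ.nonneg y hy)
  have hc' := mul_le_mul_of_nonneg_right (hcle y hy) hexp
  linarith [hφ.le_exp_mul x hx y hy]

theorem mapIter_succ' (Ts : ℕ → CM lam Astar) (k : ℕ) :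
    mapIter Ts (k + 1) = mapIter (fun i => Ts (i + 1)) k ∘ (Ts 1).toMap :=
  mapIter_add Ts k 1

theorem liftIter_succ' (Ts : ℕ → CM lam Astar) (k : ℕ) :
    liftIter Ts (k + 1) = liftIter (fun i => Ts (i + 1)) k ∘ (Ts 1).F :=
  liftIter_add Ts k 1

theorem arcPairing_comp_toMap (hlam : 0 < lam) (T : CM lam Astar) {φ : ℝ → ℝ} {z N : ℝ}
    {H : Circle1 → ℝ} (hφ : IntegrableOn φ (Ioo z (z + 1))) (hH : Measurable H)
    (hN : ∀ x, |H x| ≤ N) :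
    arcPairing z φ (H ∘ T.toMap) = arcPairing (T.F z) (T.liftTransfer φ) H := by
  rw [arcPairing, arcPairing, ← T.setIntegral_liftTransfer hlam
    (integrableOn_mul_circle hφ (hH.comp T.continuous_toMap.measurable) fun x => hN _)]
  simp only [Function.comp_apply, T.liftTransfer_mul_comp_toMap hlam]

theorem arcPairing_sub_const {φ : ℝ → ℝ} {z N : ℝ} {H : Circle1 → ℝ}
    (hφ : IntegrableOn φ (Ioo z (z + 1))) (hH : Measurable H) (hN : ∀ x, |H x| ≤ N) (c : ℝ) :
    arcPairing z (fun x => φ x - c) H = arcPairing z φ H - arcPairing z (fun _ => c) H := by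
  simp only [arcPairing, sub_mul]
  exact integral_sub (integrableOn_mul_circle hφ hH hN)
    (integrableOn_mul_circle (integrable_const c) hH hN)

theorem LogRegular.liftTransfer_of_add_div_le {K K' z : ℝ} {D : ℝ → ℝ → ℝ} {φ : ℝ → ℝ}
    (hlam : 1 ≤ lam) (hK' : 0 ≤ K') (hK : Astar + K' / lam ≤ K) (T : CM lam Astar)
    (hDT : ∀ (j : ℕ) (u v : ℝ), D (u + j) (v + j) = D u v)
    (hφ : LogRegular (fun x y => K' * |x - y| + D (T.F x) (T.F y)) z φ) :
    LogRegular (fun u v => K * |u - v| + D u v) (T.F z) (T.liftTransfer φ) := by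
  have hlam0 : 0 < lam := zero_lt_one.trans_le hlam
  have hφ' : LogRegular (fun x y => K' / lam * |T.F x - T.F y| + D (T.F x) (T.F y)) z φ :=
    hφ.mono fun x _ y _ => by
      rw [add_le_add_iff_right, div_mul_eq_mul_div, le_div_iff₀ hlam0, mul_assoc, mul_comm _ lam]
      exact mul_le_mul_of_nonneg_left (T.mul_abs_sub_le x y) hK'
  refine (LogRegular.liftTransfer hlam T (D := fun u v => K' / lam * |u - v| + D u v)
    (fun j u v => by rw [add_sub_add_right_eq_sub, hDT]) hφ').mono fun u _ v _ => ?_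
  rw [← add_assoc, ← add_mul, add_le_add_iff_right]
  exact mul_le_mul_of_nonneg_right hK (abs_nonneg _)

section Doeblin

variable {K K' z : ℝ} {φ : ℝ → ℝ}

theorem LogRegular.liftTransfer_sub_const (hlam : 1 ≤ lam) (hK : 0 ≤ K) (hKK' : K < K')
    (hstep : Astar + K' / lam ≤ K) (T : CM lam Astar)
    (hφ : LogRegular (fun x y => K * |x - y|) z φ) :
    LogRegular (fun x y => K * |x - y|) (T.F z)
      (T.liftTransfer fun x => φ x - removableMass K K' * ∫ y in Ioo z (z + 1), φ y) := by
  simpa only [add_zero] using LogRegular.liftTransfer_of_add_div_le hlam (hK.trans hKK'.le)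
    hstep T (D := fun _ _ => 0) (fun _ _ _ => rfl)
    (by simpa only [add_zero] using hφ.sub_const hK hKK')

theorem setIntegral_liftTransfer_sub_const (hlam : 0 < lam) (T : CM lam Astar)
    (hφ : IntegrableOn φ (Ioo z (z + 1))) (c : ℝ) :
    ∫ y in Ioo (T.F z) (T.F z + 1), T.liftTransfer (fun x => φ x - c) y =
      (∫ x in Ioo z (z + 1), φ x) - c := by
  rw [T.setIntegral_liftTransfer (φ := fun x => φ x - c) hlam (hφ.sub (integrable_const c)),
    integral_sub hφ (integrable_const c)]
  simp

theorem arcPairing_comp_toMap_eq_add (hlam : 0 < lam) (T : CM lam Astar) {N : ℝ}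
    {H : Circle1 → ℝ} (hφ : IntegrableOn φ (Ioo z (z + 1))) (hH : Measurable H)
    (hN : ∀ x, |H x| ≤ N) (c : ℝ) :
    arcPairing z φ (H ∘ T.toMap) =
      arcPairing (T.F z) (T.liftTransfer fun x => φ x - c) H +
        arcPairing z (fun _ => c) (H ∘ T.toMap) := by
  rw [← arcPairing_comp_toMap (φ := fun x => φ x - c) hlam T (hφ.sub (integrable_const c)) hH hN,
    arcPairing_sub_const hφ (hH.comp T.continuous_toMap.measurable) (fun x => hN _),
    sub_add_cancel]

/-- Doeblin's argument: by `LogRegular.sub_const` two densities of the same mass share a constant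
part, which cancels, and one step of the dynamics restores the regularity of the remainders. -/
theorem abs_arcPairing_mapIter_sub_le (hlam : 1 ≤ lam) (hK : 0 ≤ K) (hKK' : K < K')
    (hstep : Astar + K' / lam ≤ K) {H : Circle1 → ℝ} {N : ℝ} (hH : Measurable H)
    (hN : ∀ x, |H x| ≤ N) (p : ℕ) (Ts : ℕ → CM lam Astar) {m : ℝ} {ψ : ℝ → ℝ}
    (hφ : LogRegular (fun x y => K * |x - y|) z φ) (hψ : LogRegular (fun x y => K * |x - y|) z ψ)
    (hφm : ∫ x in Ioo z (z + 1), φ x = m) (hψm : ∫ x in Ioo z (z + 1), ψ x = m) :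
    |arcPairing z φ (H ∘ mapIter Ts p) - arcPairing z ψ (H ∘ mapIter Ts p)| ≤
      2 * N * m * (1 - removableMass K K') ^ p := by
  induction p generalizing Ts z m φ ψ with
  | zero =>
    have h₁ := hφ.abs_arcPairing_le hH hN
    have h₂ := hψ.abs_arcPairing_le hH hN
    rw [hφm] at h₁
    rw [hψm] at h₂
    calc |arcPairing z φ (H ∘ mapIter Ts 0) - arcPairing z ψ (H ∘ mapIter Ts 0)|
        ≤ |arcPairing z φ H| + |arcPairing z ψ H| := abs_sub _ _
      _ ≤ 2 * N * m * (1 - removableMass K K') ^ 0 := by rw [pow_zero]; linarith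
  | succ p ih =>
    have hlam0 : 0 < lam := zero_lt_one.trans_le hlam
    have hφ' := hφ.liftTransfer_sub_const hlam hK hKK' hstep (Ts 1)
    have hψ' := hψ.liftTransfer_sub_const hlam hK hKK' hstep (Ts 1)
    have hφm' := setIntegral_liftTransfer_sub_const hlam0 (Ts 1) hφ.integrableOn
      (removableMass K K' * m)
    have hψm' := setIntegral_liftTransfer_sub_const hlam0 (Ts 1) hψ.integrableOn
      (removableMass K K' * m)
    rw [hφm] at hφ' hφm'
    rw [hψm] at hψ' hψm'
    have hH' : Measurable (H ∘ mapIter (fun i => Ts (i + 1)) p) :=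
      hH.comp (continuous_mapIter _ p).measurable
    rw [mapIter_succ', ← Function.comp_assoc,
      arcPairing_comp_toMap_eq_add hlam0 (Ts 1) hφ.integrableOn hH' (fun _ => hN _)
        (removableMass K K' * m),
      arcPairing_comp_toMap_eq_add hlam0 (Ts 1) hψ.integrableOn hH' (fun _ => hN _)
        (removableMass K K' * m), add_sub_add_right_eq_sub]
    exact (ih _ hφ' hψ' hφm' hψm').trans_eq (by ring)

end Doeblin

theorem abs_arcPairing_mapIter_add_sub_le {K₀ K K' : ℝ} (hlam : 1 ≤ lam) (hK₀ : 0 ≤ K₀)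
    (hKK' : K < K') (hstep₀ : Astar + K₀ / lam ≤ K₀) (hK : K₀ + 1 ≤ K)
    (hstep : Astar + K' / lam ≤ K) {H : Circle1 → ℝ} {N : ℝ} (hH : Measurable H)
    (hN : ∀ x, |H x| ≤ N) (k p : ℕ) (Ts : ℕ → CM lam Astar) {z m : ℝ} {φ ψ : ℝ → ℝ}
    (hφ : LogRegular (fun x y => K₀ * |x - y| + |liftIter Ts k x - liftIter Ts k y|) z φ)
    (hψ : LogRegular (fun x y => K₀ * |x - y| + |liftIter Ts k x - liftIter Ts k y|) z ψ)
    (hφm : ∫ x in Ioo z (z + 1), φ x = m) (hψm : ∫ x in Ioo z (z + 1), ψ x = m) :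
    |arcPairing z φ (H ∘ mapIter Ts (p + k)) - arcPairing z ψ (H ∘ mapIter Ts (p + k))| ≤
      2 * N * m * (1 - removableMass K K') ^ p := by
  induction k generalizing Ts z φ ψ with
  | zero =>
    have hbase (x y : ℝ) : K₀ * |x - y| + |liftIter Ts 0 x - liftIter Ts 0 y| ≤ K * |x - y| := by
      have := mul_le_mul_of_nonneg_right hK (abs_nonneg (x - y))
      rwa [add_mul, one_mul] at this
    exact abs_arcPairing_mapIter_sub_le hlam (by linarith) hKK' hstep hH hN p Ts
      (hφ.mono fun x _ y _ => hbase x y) (hψ.mono fun x _ y _ => hbase x y) hφm hψm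
  | succ k ih =>
    have hlam0 : 0 < lam := zero_lt_one.trans_le hlam
    set T := Ts 1
    set Ts' := fun i => Ts (i + 1)
    have hpush {χ : ℝ → ℝ} (hχ : LogRegular
        (fun x y => K₀ * |x - y| + |liftIter Ts (k + 1) x - liftIter Ts (k + 1) y|) z χ) :
        LogRegular (fun u v => K₀ * |u - v| + |liftIter Ts' k u - liftIter Ts' k v|) (T.F z)
          (T.liftTransfer χ) := by
      refine LogRegular.liftTransfer_of_add_div_le hlam hK₀ hstep₀ T
        (D := fun u v => |liftIter Ts' k u - liftIter Ts' k v|) (fun j u v => ?_) ?_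
      · rw [← Int.cast_natCast (R := ℝ) j, liftIter_add_intCast_sub]
      · simpa only [liftIter_succ', Function.comp_apply] using hχ
    have hpair {χ : ℝ → ℝ} (hχ : IntegrableOn χ (Ioo z (z + 1))) :
        arcPairing z χ (H ∘ mapIter Ts (p + (k + 1))) =
          arcPairing (T.F z) (T.liftTransfer χ) (H ∘ mapIter Ts' (p + k)) := by
      rw [← arcPairing_comp_toMap hlam0 T hχ (hH.comp (continuous_mapIter _ _).measurable)
        fun x => hN _, ← add_assoc, mapIter_succ']
      rfl
    rw [hpair hφ.integrableOn, hpair hψ.integrableOn]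
    exact ih Ts' (hpush hφ) (hpush hψ)
      ((T.setIntegral_liftTransfer hlam0 hφ.integrableOn).trans hφm)
      ((T.setIntegral_liftTransfer hlam0 hψ.integrableOn).trans hψm)

/-! ### Decorrelation of regular observables -/

theorem integral_circle1_eq_setIntegral_Ioo (z : ℝ) (u : Circle1 → ℝ) :
    ∫ x, u x = ∫ x in Ioo z (z + 1), u (x : ℝ) := by
  rw [← AddCircle.integral_preimage 1 z u, integral_Ioc_eq_integral_Ioo]

theorem integrableOn_Ioo_comp_coe {u : Circle1 → ℝ} (hu : Integrable u) (z : ℝ) :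
    IntegrableOn (fun x : ℝ => u x) (Ioo z (z + 1)) :=
  ((AddCircle.measurePreserving_mk 1 z).integrable_comp_of_integrable hu).mono_measure
    (Measure.restrict_mono Ioo_subset_Ioc_self le_rfl)

theorem memD.exists_logRegular {L : ℝ} {ρ : Circle1 → ℝ} (hρ : memD L ρ) :
    ∃ z, LogRegular (fun x y => |L| * |x - y|) z (fun x => ρ x) := by
  obtain ⟨⟨hInt, -, -⟩, hpos, z, hz⟩ := hρ
  refine ⟨zrep z, integrableOn_Ioo_comp_coe hInt _, fun x _ => (hpos x).le, fun x hx y hy => ?_⟩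
  have hne {w : ℝ} (hw : w ∈ Ioo (zrep z) (zrep z + 1)) : (w : Circle1) ≠ z := fun h => by
    rw [← show ((zrep z : ℝ) : Circle1) = z from AddCircle.coe_equivIco,
      AddCircle.coe_eq_coe_iff_of_mem_Ico (a := zrep z) (Ioo_subset_Ico_self hw)
        (left_mem_Ico.2 (lt_add_one _))] at h
    exact hw.1.ne' h
  have hlog := hz x y (hne hx) (hne hy)
  rw [arcDist, arcCoord, arcCoord, AddCircle.equivIoc_coe_of_mem (Ioo_subset_Ioc_self hx),
    AddCircle.equivIoc_coe_of_mem (Ioo_subset_Ioc_self hy)] at hlog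
  have hL := mul_le_mul_of_nonneg_right (le_abs_self L) (abs_nonneg (x - y))
  rw [← Real.log_le_log_iff (hpos x) (mul_pos (Real.exp_pos _) (hpos y)),
    Real.log_mul (Real.exp_pos _).ne' (hpos y).ne', Real.log_exp]
  linarith [(abs_le.1 hlog).2]

/-- The measure `ρ 𝔪` on the circle. -/
noncomputable def densityMeasure (ρ : Circle1 → ℝ) : Measure Circle1 :=
  volume.withDensity fun x => ENNReal.ofReal (ρ x)

theorem integral_densityMeasure {ρ : Circle1 → ℝ} (hρ : IsProbDensity ρ) (g : Circle1 → ℝ) :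
    ∫ x, g x ∂densityMeasure ρ = ∫ x, g x * ρ x := by
  rw [densityMeasure, integral_withDensity_eq_integral_toReal_smul₀
    hρ.1.aestronglyMeasurable.aemeasurable.ennreal_ofReal
    (ae_of_all _ fun _ => ENNReal.ofReal_lt_top)]
  simp only [ENNReal.toReal_ofReal (hρ.2.2 _), smul_eq_mul, mul_comm]

theorem isProbabilityMeasure_densityMeasure {ρ : Circle1 → ℝ} (hρ : IsProbDensity ρ) :
    IsProbabilityMeasure (densityMeasure ρ) where
  measure_univ := by
    rw [densityMeasure, withDensity_apply _ .univ, Measure.restrict_univ,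
      ← ofReal_integral_eq_lintegral_ofReal hρ.1 (ae_of_all _ hρ.2.2), hρ.2.1, ENNReal.ofReal_one]

theorem arcPairing_eq_integral_densityMeasure {ρ : Circle1 → ℝ} (hρ : IsProbDensity ρ) (z : ℝ)
    (g H : Circle1 → ℝ) :
    arcPairing z (fun x => g x * ρ x) H = ∫ x, g x * H x ∂densityMeasure ρ := by
  rw [integral_densityMeasure hρ, integral_circle1_eq_setIntegral_Ioo z]
  simp only [arcPairing, mul_right_comm]

theorem LogRegular.mul {D E : ℝ → ℝ → ℝ} {z N : ℝ} {φ w : ℝ → ℝ} (hφ : LogRegular D z φ)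
    (hwm : Measurable w) (hwN : ∀ x, |w x| ≤ N) (hw0 : ∀ x, 0 ≤ w x)
    (hw : ∀ x y, w x ≤ Real.exp (E x y) * w y) :
    LogRegular (fun x y => D x y + E x y) z (fun x => w x * φ x) where
  integrableOn := hφ.integrableOn.bdd_mul hwm.aestronglyMeasurable (ae_of_all _ hwN)
  nonneg x hx := mul_nonneg (hw0 x) (hφ.nonneg x hx)
  le_exp_mul x hx y hy := calc
    w x * φ x ≤ (Real.exp (E x y) * w y) * (Real.exp (D x y) * φ y) :=
      mul_le_mul (hw x y) (hφ.le_exp_mul x hx y hy) (hφ.nonneg x hx)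
        (mul_nonneg (Real.exp_pos _).le (hw0 y))
    _ = Real.exp (D x y + E x y) * (w y * φ y) := by rw [Real.exp_add]; ring

/-- `g` is bounded by `M`, and its oscillation is at most `M` times the distance of the lifted
`k`-th iterates: `g` depends smoothly on the orbit up to time `k`. -/
structure RegularAt (Ts : ℕ → CM lam Astar) (k : ℕ) (M : ℝ) (g : Circle1 → ℝ) : Prop where
  abs_apply_le : ∀ x, |g x| ≤ M
  abs_apply_sub_le : ∀ x y : ℝ, |g x - g y| ≤ M * |liftIter Ts k x - liftIter Ts k y|

namespace RegularAt

variable {Ts : ℕ → CM lam Astar} {k : ℕ} {M : ℝ} {g : Circle1 → ℝ}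

theorem nonneg (hg : RegularAt Ts k M g) : 0 ≤ M :=
  (abs_nonneg _).trans (hg.abs_apply_le 0)

theorem continuous (hg : RegularAt Ts k M g) : Continuous g := by
  refine continuous_coinduced_dom.2 (continuous_iff_continuousAt.2 fun y => ?_)
  rw [ContinuousAt, tendsto_iff_dist_tendsto_zero]
  have hlift : Tendsto (fun x => M * |liftIter Ts k x - liftIter Ts k y|) (𝓝 y) (𝓝 0) := by
    have h : Continuous fun x => M * |liftIter Ts k x - liftIter Ts k y| :=
      continuous_const.mul ((continuous_liftIter Ts k).sub continuous_const).abs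
    simpa using h.tendsto y
  exact squeeze_zero (fun _ => dist_nonneg) (fun x => hg.abs_apply_sub_le x y) hlift

theorem abs_sub_le_mul_inv_pow (hlam : 0 < lam) (hg : RegularAt Ts k M g) (j : ℕ) (x y : ℝ) :
    |g x - g y| ≤ M * |liftIter Ts (k + j) x - liftIter Ts (k + j) y| * lam⁻¹ ^ j := by
  rw [mul_assoc, inv_pow, ← div_eq_mul_inv]
  refine (hg.abs_apply_sub_le x y).trans (mul_le_mul_of_nonneg_left ?_ hg.nonneg)
  exact (le_div_iff₀' (pow_pos hlam _)).2 (pow_mul_abs_liftIter_sub_le Ts hlam.le k j x y)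

theorem mono (hlam : 1 ≤ lam) (hg : RegularAt Ts k M g) (j : ℕ) : RegularAt Ts (k + j) M g where
  abs_apply_le := hg.abs_apply_le
  abs_apply_sub_le x y :=
    (hg.abs_sub_le_mul_inv_pow (zero_lt_one.trans_le hlam) j x y).trans <|
      mul_le_of_le_one_right (mul_nonneg hg.nonneg (abs_nonneg _)) <|
        pow_le_one₀ (inv_nonneg.2 (zero_le_one.trans hlam)) (inv_le_one_of_one_le₀ hlam)

theorem mul {N : ℝ} {h : Circle1 → ℝ} (hg : RegularAt Ts k M g) (hh : RegularAt Ts k N h) :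
    RegularAt Ts k (2 * (M * N)) (g * h) where
  abs_apply_le x := by
    have := mul_nonneg hg.nonneg hh.nonneg
    rw [Pi.mul_apply, abs_mul]
    linarith [mul_le_mul (hg.abs_apply_le x) (hh.abs_apply_le x) (abs_nonneg _) hg.nonneg]
  abs_apply_sub_le x y := calc
    |(g * h) x - (g * h) y| = |g x * (h x - h y) + (g x - g y) * h y| := by
      simp only [Pi.mul_apply]; ring_nf
    _ ≤ |g x| * |h x - h y| + |g x - g y| * |h y| := by
      simpa only [abs_mul] using abs_add_le (g x * (h x - h y)) ((g x - g y) * h y)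
    _ ≤ M * (N * |liftIter Ts k x - liftIter Ts k y|) +
        M * |liftIter Ts k x - liftIter Ts k y| * N :=
      add_le_add (mul_le_mul (hg.abs_apply_le x) (hh.abs_apply_sub_le x y) (abs_nonneg _) hg.nonneg)
        (mul_le_mul (hg.abs_apply_sub_le x y) (hh.abs_apply_le y) (abs_nonneg _)
          (mul_nonneg hg.nonneg (abs_nonneg _)))
    _ = 2 * (M * N) * |liftIter Ts k x - liftIter Ts k y| := by ring

theorem comp_mapIter {M : NNReal} {h : Circle1 → ℝ} (hh : LipschitzWith M h)
    (hM : ∀ x, |h x| ≤ M) (Ts : ℕ → CM lam Astar) (k : ℕ) :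
    RegularAt Ts k M (h ∘ mapIter Ts k) where
  abs_apply_le _ := hM _
  abs_apply_sub_le x y := by
    simp only [Function.comp_apply, mapIter_coe]
    refine (hh.dist_le_mul _ _).trans (mul_le_mul_of_nonneg_left ?_ M.2)
    rw [dist_eq_norm, ← AddCircle.coe_sub]
    exact QuotientAddGroup.norm_mk_le_norm

theorem logRegular_add_mul {z : ℝ} {D : ℝ → ℝ → ℝ} {φ : ℝ → ℝ} (hg : RegularAt Ts k M g)
    (hφ : LogRegular D z φ) :
    LogRegular (fun x y => D x y + |liftIter Ts k x - liftIter Ts k y|) z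
      (fun x => (g x + 2 * M) * φ x) := by
  have hgM (x : Circle1) := abs_le.1 (hg.abs_apply_le x)
  refine hφ.mul (w := fun x : ℝ => g x + 2 * M) (N := 3 * M) ?_ (fun x => ?_) (fun x => ?_)
    fun x y => ?_
  · exact (hg.continuous.measurable.comp AddCircle.measurable_mk').add_const _
  · rw [abs_le]
    constructor <;> linarith [hgM x]
  · linarith [hgM x, hg.nonneg]
  have hd : 0 ≤ |liftIter Ts k x - liftIter Ts k y| := abs_nonneg _
  set d := |liftIter Ts k x - liftIter Ts k y|
  calc g x + 2 * M ≤ (g y + 2 * M) + M * d := by linarith [(abs_le.1 (hg.abs_apply_sub_le x y)).2]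
    _ ≤ (d + 1) * (g y + 2 * M) := by
      linarith [mul_nonneg hd (show 0 ≤ g y + M by linarith [hgM y])]
    _ ≤ Real.exp d * (g y + 2 * M) :=
      mul_le_mul_of_nonneg_right (Real.add_one_le_exp d) (by linarith [hgM y, hg.nonneg])

theorem integral_add_mem_Icc {μ : Measure Circle1} [IsProbabilityMeasure μ]
    (hg : RegularAt Ts k M g) : ∫ x, (g x + 2 * M) ∂μ ∈ Icc 0 (3 * M) := by
  have hgM (x : Circle1) := abs_le.1 (hg.abs_apply_le x)
  have hle (x : Circle1) : ‖g x + 2 * M‖ ≤ 3 * M := by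
    rw [Real.norm_eq_abs, abs_le]
    constructor <;> linarith [hgM x]
  constructor
  · refine integral_nonneg fun x => ?_
    rw [Pi.zero_apply]
    linarith [hgM x, hg.nonneg]
  · simpa using (le_abs_self _).trans (norm_integral_le_of_norm_le_const (ae_of_all μ hle))

end RegularAt

/-- Exponential loss of memory of the dynamics under `μ`, at rate `σ`: an observable that is regular
at time `k` decorrelates from the future after time `p + k`. -/
def Decorrelates (Ts : ℕ → CM lam Astar) (μ : Measure Circle1) (C σ : ℝ) : Prop :=
  ∀ ⦃k p : ℕ⦄ ⦃M N : ℝ⦄ ⦃g H : Circle1 → ℝ⦄, RegularAt Ts k M g → Measurable H →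
    (∀ x, |H x| ≤ N) → |cov[g, H ∘ mapIter Ts (p + k); μ]| ≤ C * M * N * σ ^ p

theorem memLp_of_abs_le {μ : Measure Circle1} [IsFiniteMeasure μ] {g : Circle1 → ℝ} {M : ℝ}
    (hg : Measurable g) (hM : ∀ x, |g x| ≤ M) : MemLp g 2 μ :=
  .of_bound hg.aestronglyMeasurable M (ae_of_all _ hM)

theorem exists_contraction_constants (hlam : 1 < lam) (hA : 0 ≤ Astar) (L : ℝ) :
    ∃ K₀ K K' : ℝ, |L| ≤ K₀ ∧ K < K' ∧ Astar + K₀ / lam ≤ K₀ ∧ K₀ + 1 ≤ K ∧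
      Astar + K' / lam ≤ K := by
  have : 0 < lam := zero_lt_one.trans hlam
  have hlam1 : 0 < lam - 1 := sub_pos.2 hlam
  have hinv : 0 ≤ 1 - lam⁻¹ := sub_nonneg.2 (inv_le_one_of_one_le₀ hlam.le)
  set B := Astar * lam / (lam - 1) with hB
  have hB0 : 0 ≤ B := by positivity
  have hAB : Astar = B * (1 - lam⁻¹) := by rw [hB]; field_simp
  have hL := abs_nonneg L
  refine ⟨|L| + 2 * B, |L| + 2 * B + 1, (|L| + 2 * B + 1) * (1 + lam) / 2, ?_, ?_, ?_, le_rfl, ?_⟩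
  · linarith
  · nlinarith
  · rw [hAB, div_eq_mul_inv]
    nlinarith [mul_nonneg (add_nonneg hL hB0) hinv]
  · rw [hAB, show (|L| + 2 * B + 1) * (1 + lam) / 2 / lam = (|L| + 2 * B + 1) * (lam⁻¹ + 1) / 2 by
      field_simp]
    nlinarith [mul_nonneg (add_nonneg hL zero_le_one) hinv]

theorem removableMass_mem_Ioo {K K' : ℝ} (hK : 0 < K) (hKK' : K < K') :
    removableMass K K' ∈ Ioo (0 : ℝ) 1 := by
  have hr0 : 0 < K / K' := div_pos hK (hK.trans hKK')
  have hr1 : 0 < 1 - K / K' := sub_pos.2 ((div_lt_one (hK.trans hKK')).2 hKK')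
  exact ⟨mul_pos (Real.exp_pos _) hr1, mul_lt_one_of_nonneg_of_lt_one_right
    (Real.exp_le_one_iff.2 (neg_nonpos.2 hK.le)) hr1.le (by linarith)⟩

theorem covariance_eq_arcPairing_sub {ρ g H : Circle1 → ℝ} (hρ : IsProbDensity ρ)
    (hg : MemLp g 2 (densityMeasure ρ)) (hH : MemLp H 2 (densityMeasure ρ)) (z c : ℝ) :
    cov[g, H; densityMeasure ρ] = arcPairing z (fun x => (g x + c) * ρ x) H -
      arcPairing z (fun x => (∫ y, (g y + c) ∂densityMeasure ρ) * ρ x) H := by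
  have := isProbabilityMeasure_densityMeasure hρ
  rw [arcPairing_eq_integral_densityMeasure hρ z (fun x => g x + c),
    arcPairing_eq_integral_densityMeasure hρ z (fun _ => ∫ y, (g y + c) ∂densityMeasure ρ),
    integral_const_mul, ← covariance_add_const_left (hg.integrable one_le_two) c]
  exact covariance_eq_sub (hg.add (memLp_const c)) hH

/-- Shifting `g` by `2 * M` makes `(g + 2 * M) ρ` a density that is regular at time `k`; it is
compared with the multiple of `ρ` of the same mass. -/
theorem abs_covariance_comp_mapIter_le {K₀ K K' L M N : ℝ} {ρ : Circle1 → ℝ} {Ts : ℕ → CM lam Astar}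
    {k : ℕ} {g H : Circle1 → ℝ} (hlam : 1 ≤ lam) (hL : |L| ≤ K₀) (hKK' : K < K')
    (hstep₀ : Astar + K₀ / lam ≤ K₀) (hK : K₀ + 1 ≤ K) (hstep : Astar + K' / lam ≤ K)
    (hρ : memD L ρ) (hg : RegularAt Ts k M g) (hH : Measurable H) (hN : ∀ x, |H x| ≤ N) (p : ℕ) :
    |cov[g, H ∘ mapIter Ts (p + k); densityMeasure ρ]| ≤
      6 * M * N * (1 - removableMass K K') ^ p := by
  have := isProbabilityMeasure_densityMeasure hρ.1
  obtain ⟨z, hz⟩ := hρ.exists_logRegular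
  have hK₀ : 0 ≤ K₀ := (abs_nonneg L).trans hL
  obtain ⟨ha0, ha3⟩ := hg.integral_add_mem_Icc (μ := densityMeasure ρ)
  set a := ∫ x, (g x + 2 * M) ∂densityMeasure ρ
  have hφ : LogRegular (fun x y => K₀ * |x - y| + |liftIter Ts k x - liftIter Ts k y|) z
      (fun x => (g x + 2 * M) * ρ x) := (hg.logRegular_add_mul hz).mono fun x _ y _ =>
    add_le_add_left (mul_le_mul_of_nonneg_right hL (abs_nonneg _)) _
  have hψ : LogRegular (fun x y => K₀ * |x - y| + |liftIter Ts k x - liftIter Ts k y|) z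
      (fun x => a * ρ x) := (hz.const_mul ha0).mono fun x _ y _ =>
    (mul_le_mul_of_nonneg_right hL (abs_nonneg _)).trans (le_add_of_nonneg_right (abs_nonneg _))
  have hψm : ∫ x in Ioo z (z + 1), a * ρ x = a := by
    rw [integral_const_mul, ← integral_circle1_eq_setIntegral_Ioo, hρ.1.2.1, mul_one]
  have hφm : ∫ x in Ioo z (z + 1), (g x + 2 * M) * ρ x = a := by
    rw [← integral_circle1_eq_setIntegral_Ioo z fun x => (g x + 2 * M) * ρ x,
      ← integral_densityMeasure hρ.1]
  rw [covariance_eq_arcPairing_sub hρ.1 (memLp_of_abs_le hg.continuous.measurable hg.abs_apply_le)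
    (memLp_of_abs_le (hH.comp (continuous_mapIter _ _).measurable) fun _ => hN _) z (2 * M)]
  refine (abs_arcPairing_mapIter_add_sub_le hlam hK₀ hKK' hstep₀ hK hstep hH hN k p Ts hφ hψ hφm
    hψm).trans ?_
  have hN0 : 0 ≤ N := (abs_nonneg _).trans (hN 0)
  have hrate : 0 ≤ 1 - removableMass K K' :=
    sub_nonneg.2 (removableMass_mem_Ioo (by linarith) hKK').2.le
  calc 2 * N * a * (1 - removableMass K K') ^ p
      ≤ 2 * N * (3 * M) * (1 - removableMass K K') ^ p := by gcongr
    _ = 6 * M * N * (1 - removableMass K K') ^ p := by ring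

theorem memD.exists_decorrelates {L : ℝ} {ρ : Circle1 → ℝ} (hlam : 1 < lam) (hA : 0 ≤ Astar)
    (hρ : memD L ρ) :
    ∃ σ ∈ Ioo (0 : ℝ) 1, ∀ Ts : ℕ → CM lam Astar,
      Decorrelates Ts (densityMeasure ρ) 6 (σ ^ 3) := by
  obtain ⟨K₀, K, K', hL, hKK', hstep₀, hK, hstep⟩ := exists_contraction_constants hlam hA L
  have hK0 : 0 < K := by linarith [abs_nonneg L]
  obtain ⟨hc0, hc1⟩ := removableMass_mem_Ioo hK0 hKK'
  set c := removableMass K K'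
  have hbernoulli : 1 - c ≤ (1 - c / 3) ^ 3 := by
    have := one_add_mul_le_pow (show -2 ≤ -(c / 3) by linarith) 3
    norm_num at this
    linarith
  refine ⟨1 - c / 3, ⟨by linarith, by linarith⟩, fun Ts k p M N g H hg hH hN => ?_⟩
  refine (abs_covariance_comp_mapIter_le hlam.le hL hKK' hstep₀ hK hstep hρ hg hH hN p).trans ?_
  have hM := hg.nonneg
  have hN0 : 0 ≤ N := (abs_nonneg _).trans (hN 0)
  gcongr

/-! ### Covariance with sums of later observables -/

theorem abs_covariance_sum_mul_le {Ω ι : Type*} [MeasurableSpace Ω] {μ : Measure Ω}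
    [IsFiniteMeasure μ] {G : Ω → ℝ} {Y : ι → Ω → ℝ} {b e : ι → ℝ} (S : Finset ι) (hG : MemLp G 2 μ)
    (hY : ∀ i, MemLp (Y i) 2 μ) (hb : ∀ i, |b i| ≤ 1) (he : ∀ i, |cov[G, Y i; μ]| ≤ e i) :
    |cov[G, fun x => ∑ i ∈ S, b i * Y i x; μ]| ≤ ∑ i ∈ S, e i := by
  rw [covariance_fun_sum_right' (fun i _ => (hY i).const_mul (b i)) hG]
  refine (Finset.abs_sum_le_sum_abs _ _).trans (Finset.sum_le_sum fun i _ => ?_)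
  rw [covariance_const_mul_right, abs_mul]
  exact (mul_le_of_le_one_left (abs_nonneg _) (hb i)).trans (he i)

theorem covariance_mul_right_of_integral_eq_zero {Ω : Type*} [MeasurableSpace Ω] {μ : Measure Ω}
    [IsProbabilityMeasure μ] {G U W : Ω → ℝ} (hG : MemLp G 2 μ) (hU : MemLp U 2 μ)
    (hW : MemLp W 2 μ) (hGU : MemLp (G * U) 2 μ) (hUW : MemLp (U * W) 2 μ) (hW0 : μ[W] = 0) :
    cov[G, U * W; μ] = cov[G * U, W; μ] - μ[G] * cov[U, W; μ] := by
  rw [covariance_eq_sub hG hUW, covariance_eq_sub hGU hW, covariance_eq_sub hU hW, hW0, mul_assoc]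
  ring

theorem abs_mul_apply_le {α : Type*} {g h : α → ℝ} {M N : ℝ} (hM : ∀ x, |g x| ≤ M)
    (hN : ∀ x, |h x| ≤ N) (x : α) : |(g * h) x| ≤ M * N := by
  rw [Pi.mul_apply, abs_mul]
  exact mul_le_mul (hM x) (hN x) (abs_nonneg _) ((abs_nonneg _).trans (hM x))

theorem sum_range_pow_le_inv_one_sub {r : ℝ} (hr0 : 0 ≤ r) (hr1 : r < 1) (q : ℕ) :
    ∑ i ∈ Finset.range q, r ^ i ≤ (1 - r)⁻¹ := by
  rw [← tsum_geometric_of_lt_one hr0 hr1]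
  exact (summable_geometric_of_lt_one hr0 hr1).sum_le_tsum _ fun i _ => pow_nonneg hr0 i

namespace Decorrelates

variable {Ts : ℕ → CM lam Astar} {μ : Measure Circle1} [IsProbabilityMeasure μ] {C σ : ℝ}

theorem abs_covariance_mul_le_of_integral_eq_zero (hdec : Decorrelates Ts μ C σ) {k p : ℕ}
    {M M' N : ℝ} {G U V : Circle1 → ℝ} (hG : RegularAt Ts k M G) (hU : RegularAt Ts k M' U)
    (hV : Measurable V) (hN : ∀ x, |V x| ≤ N) (hV0 : ∫ x, V (mapIter Ts (p + k) x) ∂μ = 0) :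
    |cov[G, U * V ∘ mapIter Ts (p + k); μ]| ≤ 3 * (C * (M * M') * N * σ ^ p) := by
  set W := V ∘ mapIter Ts (p + k)
  have hW : Measurable W := hV.comp (continuous_mapIter _ _).measurable
  have hGL : MemLp G 2 μ := memLp_of_abs_le hG.continuous.measurable hG.abs_apply_le
  have hUL : MemLp U 2 μ := memLp_of_abs_le hU.continuous.measurable hU.abs_apply_le
  have hGU := hG.mul hU
  have hGUL : MemLp (G * U) 2 μ := memLp_of_abs_le hGU.continuous.measurable hGU.abs_apply_le
  have hWL : MemLp W 2 μ := memLp_of_abs_le hW fun _ => hN _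
  have hUWL : MemLp (U * W) 2 μ := memLp_of_abs_le (hU.continuous.measurable.mul hW)
    (abs_mul_apply_le hU.abs_apply_le fun _ => hN _)
  have hEG : |μ[G]| ≤ M := by
    simpa using norm_integral_le_of_norm_le_const (f := G) (ae_of_all μ hG.abs_apply_le)
  calc |cov[G, U * W; μ]| ≤ |cov[G * U, W; μ]| + |μ[G]| * |cov[U, W; μ]| := by
        rw [covariance_mul_right_of_integral_eq_zero hGL hUL hWL hGUL hUWL hV0, ← abs_mul]
        exact abs_sub _ _
    _ ≤ C * (2 * (M * M')) * N * σ ^ p + M * (C * M' * N * σ ^ p) :=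
        add_le_add (hdec hGU hV hN) (mul_le_mul hEG (hdec hU hV hN) (abs_nonneg _) hG.nonneg)
    _ = 3 * (C * (M * M') * N * σ ^ p) := by ring

/-- The rate is that of the larger of the two gaps `i` and `d`; it is traded for `i + (i + d)`,
which is at most three times as large and makes the bound summable in the two times. -/
theorem abs_covariance_mul_comp_mapIter_le (hlam : 1 ≤ lam) (hC : 0 ≤ C) (hσ0 : 0 ≤ σ)
    (hσ1 : σ ≤ 1) (hdec : Decorrelates Ts μ C (σ ^ 3)) {m : ℕ} {M : ℝ} {N : NNReal}
    {G h₁ h₂ : Circle1 → ℝ} (hG : RegularAt Ts m M G) (hh₁ : LipschitzWith N h₁)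
    (hN₁ : ∀ x, |h₁ x| ≤ N) (hh₂ : Measurable h₂) (hN₂ : ∀ x, |h₂ x| ≤ N) (i d : ℕ)
    (h0 : ∫ x, h₂ (mapIter Ts (i + d + m) x) ∂μ = 0) :
    |cov[G, h₁ ∘ mapIter Ts (i + m) * h₂ ∘ mapIter Ts (i + d + m); μ]| ≤
      3 * (C * M * N ^ 2) * σ ^ (i + (i + d)) := by
  have hM := hG.nonneg
  have hshift : i + d + m = d + (i + m) := by ring
  rw [hshift] at h0 ⊢
  have hgap₁ : |cov[G, h₁ ∘ mapIter Ts (i + m) * h₂ ∘ mapIter Ts (d + (i + m)); μ]| ≤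
      C * M * N ^ 2 * (σ ^ 3) ^ i := by
    set H := h₁ * h₂ ∘ mapIter (fun l => Ts (l + (i + m))) d
    have hH : Measurable H :=
      hh₁.continuous.measurable.mul (hh₂.comp (continuous_mapIter _ _).measurable)
    rw [mapIter_add _ d, sq]
    exact hdec hG hH (abs_mul_apply_le hN₁ fun _ => hN₂ _)
  have hgap₂ : |cov[G, h₁ ∘ mapIter Ts (i + m) * h₂ ∘ mapIter Ts (d + (i + m)); μ]| ≤
      3 * (C * M * N ^ 2) * (σ ^ 3) ^ d := by
    have hGi : RegularAt Ts (i + m) M G := by simpa only [add_comm m] using hG.mono hlam i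
    refine (hdec.abs_covariance_mul_le_of_integral_eq_zero hGi
      (.comp_mapIter hh₁ hN₁ Ts (i + m)) hh₂ hN₂ h0).trans_eq (by ring)
  have hnn : 0 ≤ C * M * N ^ 2 := by positivity
  rcases le_total i d with hid | hdi
  · refine hgap₂.trans (mul_le_mul_of_nonneg_left ?_ (by positivity))
    rw [← pow_mul]
    exact pow_le_pow_of_le_one hσ0 hσ1 (by omega)
  · have hpow : (σ ^ 3) ^ i ≤ σ ^ (i + (i + d)) := by
      rw [← pow_mul]
      exact pow_le_pow_of_le_one hσ0 hσ1 (by omega)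
    nlinarith [mul_le_mul_of_nonneg_left hpow hnn, pow_nonneg hσ0 (i + (i + d))]

theorem abs_covariance_sum_le (hC : 0 ≤ C) (hσ0 : 0 ≤ σ) (hσ1 : σ < 1)
    (hdec : Decorrelates Ts μ C σ) {m : ℕ} {M N : ℝ} {G : Circle1 → ℝ} {h : ℕ → Circle1 → ℝ}
    {b : ℕ → ℝ} (hG : RegularAt Ts m M G) (hh : ∀ i, Measurable (h i))
    (hN : ∀ i x, |h i x| ≤ N) (hb : ∀ i, |b i| ≤ 1) (q : ℕ) :
    |cov[G, fun x => ∑ i ∈ Finset.range q, b i * h i (mapIter Ts (i + m) x); μ]| ≤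
      C * M * N * (1 - σ)⁻¹ := by
  have hM := hG.nonneg
  have hN0 : 0 ≤ N := (abs_nonneg _).trans (hN 0 0)
  refine (abs_covariance_sum_mul_le (Y := fun i => h i ∘ mapIter Ts (i + m)) (Finset.range q)
    (memLp_of_abs_le hG.continuous.measurable hG.abs_apply_le)
    (fun i => memLp_of_abs_le ((hh i).comp (continuous_mapIter _ _).measurable) fun _ => hN i _) hb
    fun i => hdec hG (hh i) (hN i)).trans ?_
  rw [← Finset.mul_sum]
  exact mul_le_mul_of_nonneg_left (sum_range_pow_le_inv_one_sub hσ0 hσ1 q) (by positivity)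

theorem abs_covariance_sum_sq_le (hlam : 1 ≤ lam) (hC : 0 ≤ C) (hσ0 : 0 ≤ σ) (hσ1 : σ < 1)
    (hdec : Decorrelates Ts μ C (σ ^ 3)) {m : ℕ} {M : ℝ} {N : NNReal} {G : Circle1 → ℝ}
    {h : ℕ → Circle1 → ℝ} {b : ℕ → ℝ} (hG : RegularAt Ts m M G)
    (hh : ∀ i, LipschitzWith N (h i)) (hN : ∀ i x, |h i x| ≤ N) (hb : ∀ i, |b i| ≤ 1)
    (h0 : ∀ i, ∫ x, h i (mapIter Ts (i + m) x) ∂μ = 0) (q : ℕ) :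
    |cov[G, fun x => (∑ i ∈ Finset.range q, b i * h i (mapIter Ts (i + m) x)) ^ 2; μ]| ≤
      3 * (C * M * N ^ 2) * ((1 - σ)⁻¹) ^ 2 := by
  have hM := hG.nonneg
  set Y : ℕ → Circle1 → ℝ := fun i => h i ∘ mapIter Ts (i + m)
  have hY (i : ℕ) : Measurable (Y i) :=
    (hh i).continuous.measurable.comp (continuous_mapIter _ _).measurable
  have hpair (i j : ℕ) : |cov[G, Y i * Y j; μ]| ≤ 3 * (C * M * N ^ 2) * σ ^ (i + j) := by
    wlog hij : i ≤ j generalizing i j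
    · rw [mul_comm (Y i), add_comm i]
      exact this j i (le_of_not_ge hij)
    obtain ⟨d, rfl⟩ := Nat.exists_eq_add_of_le hij
    exact hdec.abs_covariance_mul_comp_mapIter_le hlam hC hσ0 hσ1.le hG (hh i) (hN i)
      (hh _).continuous.measurable (hN _) i d (h0 _)
  have hYL (ij : ℕ × ℕ) : MemLp (Y ij.1 * Y ij.2) 2 μ :=
    memLp_of_abs_le ((hY _).mul (hY _)) (abs_mul_apply_le (fun _ => hN _ _) fun _ => hN _ _)
  have hsq (x : Circle1) : (∑ i ∈ Finset.range q, b i * h i (mapIter Ts (i + m) x)) ^ 2 =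
      ∑ ij ∈ Finset.range q ×ˢ Finset.range q, b ij.1 * b ij.2 * (Y ij.1 * Y ij.2) x := by
    rw [sq, Finset.sum_mul_sum, Finset.sum_product]
    exact Finset.sum_congr rfl fun i _ => Finset.sum_congr rfl fun j _ => mul_mul_mul_comm _ _ _ _
  simp only [hsq]
  refine (abs_covariance_sum_mul_le (b := fun ij : ℕ × ℕ => b ij.1 * b ij.2)
    (Y := fun ij : ℕ × ℕ => Y ij.1 * Y ij.2) _
    (memLp_of_abs_le hG.continuous.measurable hG.abs_apply_le) hYL (fun ij => ?_)
    fun ij => hpair ij.1 ij.2).trans ?_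
  · rw [abs_mul]
    exact mul_le_one₀ (hb _) (abs_nonneg _) (hb _)
  rw [← Finset.mul_sum, Finset.sum_product]
  simp only [pow_add]
  rw [← Finset.sum_mul_sum, ← sq]
  have := sum_range_pow_le_inv_one_sub hσ0 hσ1 q
  gcongr

theorem abs_covariance_sum_pow_le (hlam : 1 ≤ lam) (hC : 0 ≤ C) (hσ0 : 0 ≤ σ) (hσ1 : σ < 1)
    (hdec : Decorrelates Ts μ C (σ ^ 3)) {m : ℕ} {M : ℝ} {N : NNReal} {G : Circle1 → ℝ}
    {h : ℕ → Circle1 → ℝ} {b : ℕ → ℝ} (hG : RegularAt Ts m M G)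
    (hh : ∀ i, LipschitzWith N (h i)) (hN : ∀ i x, |h i x| ≤ N) (hb : ∀ i, |b i| ≤ 1)
    (h0 : ∀ i, ∫ x, h i (mapIter Ts (i + m) x) ∂μ = 0) (q : ℕ) {r : ℕ} (hr : r = 1 ∨ r = 2) :
    |cov[G, fun x => (∑ i ∈ Finset.range q, b i * h i (mapIter Ts (i + m) x)) ^ r; μ]| ≤
      3 * (C * M * N ^ r) * ((1 - σ)⁻¹) ^ r := by
  rcases hr with rfl | rfl
  · have hM := hG.nonneg
    have hσ3 : σ ^ 3 ≤ σ := pow_le_of_le_one hσ0 hσ1.le three_ne_zero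
    have : 0 < 1 - σ := sub_pos.2 hσ1
    simp only [pow_one]
    calc _ ≤ C * M * N * (1 - σ ^ 3)⁻¹ :=
          hdec.abs_covariance_sum_le hC (pow_nonneg hσ0 3) (hσ3.trans_lt hσ1) hG
            (fun i => (hh i).continuous.measurable) hN hb q
      _ ≤ C * M * N * (1 - σ)⁻¹ := by gcongr
      _ ≤ 3 * (C * M * N) * (1 - σ)⁻¹ := by
          rw [mul_assoc 3]
          exact le_mul_of_one_le_left (by positivity) (by norm_num)
  · exact hdec.abs_covariance_sum_sq_le hlam hC hσ0 hσ1 hG hh hN hb h0 q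

end Decorrelates

/-! ### Birkhoff sums -/

/-- The length of `[k, k + 1] ∩ [0, a]`, for `0 ≤ a`: the weight of the `k`-th term in a Birkhoff
sum that is interpolated linearly up to the real time `a`. -/
noncomputable def rampWeight (a : ℝ) (k : ℕ) : ℝ := max 0 (min 1 (a - k))

theorem rampWeight_mem_Icc (a : ℝ) (k : ℕ) : rampWeight a k ∈ Icc (0 : ℝ) 1 :=
  ⟨le_max_left _ _, max_le zero_le_one (min_le_left _ _)⟩

theorem rampWeight_of_lt_floor {a : ℝ} {k : ℕ} (h : k < ⌊a⌋₊) : rampWeight a k = 1 := by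
  have h' : ((k + 1 : ℕ) : ℝ) ≤ a := (Nat.le_floor_iff' k.succ_ne_zero).1 h
  push_cast at h'
  rw [rampWeight, min_eq_left (by linarith), max_eq_right zero_le_one]

theorem rampWeight_floor {a : ℝ} (ha : 0 ≤ a) : rampWeight a ⌊a⌋₊ = Int.fract a := by
  have hfract : a - ⌊a⌋₊ = Int.fract a := by rw [natCast_floor_eq_intCast_floor ha, Int.fract]
  rw [rampWeight, hfract, min_eq_right (Int.fract_lt_one a).le, max_eq_right (Int.fract_nonneg a)]

theorem rampWeight_of_floor_lt {a : ℝ} {k : ℕ} (h : ⌊a⌋₊ < k) : rampWeight a k = 0 :=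
  max_eq_left ((min_le_right _ _).trans (sub_nonpos.2 (Nat.lt_of_floor_lt h).le))

theorem sum_range_rampWeight_mul {a : ℝ} (ha : 0 ≤ a) (y : ℕ → ℝ) {q : ℕ} (hq : ⌊a⌋₊ < q) :
    ∑ k ∈ Finset.range q, rampWeight a k * y k =
      (∑ k ∈ Finset.range ⌊a⌋₊, y k) + Int.fract a * y ⌊a⌋₊ := by
  obtain ⟨d, rfl⟩ := Nat.exists_eq_add_of_lt hq
  rw [show ⌊a⌋₊ + d + 1 = ⌊a⌋₊ + 1 + d by ring, Finset.sum_range_add, Finset.sum_range_succ,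
    rampWeight_floor ha, Finset.sum_eq_zero (s := Finset.range d), add_zero]
  · refine congrArg (· + _) (Finset.sum_congr rfl fun k hk => ?_)
    rw [rampWeight_of_lt_floor (Finset.mem_range.1 hk), one_mul]
  · intro k _
    rw [rampWeight_of_floor_lt (by omega), zero_mul]

section Birkhoff

variable (Tarr : ℕ → ℕ → CM lam Astar) {f : Circle1 → ℝ} (n : ℕ)

theorem zetaP_eq_sum (f : Circle1 → ℝ) {s : ℝ} (hs : 0 ≤ s) {q : ℕ} (hq : ⌊n * s⌋₊ < q)
    (x : Circle1) : zetaP Tarr f n x s =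
      (n : ℝ)⁻¹ * ∑ k ∈ Finset.range q, rampWeight (n * s) k * f (mapIter (Tarr n) k x) := by
  rw [sum_range_rampWeight_mul (mul_nonneg n.cast_nonneg hs) _ hq]
  simp only [zetaP, fnk, arrIter_eq_mapIter]

theorem continuous_zetaP (hf : Continuous f) (s : ℝ) : Continuous fun x => zetaP Tarr f n x s := by
  simp only [zetaP, fnk, arrIter_eq_mapIter]
  have hfk (k : ℕ) : Continuous fun x => f (mapIter (Tarr n) k x) :=
    hf.comp (continuous_mapIter _ k)
  exact ((continuous_finsetSum _ fun k _ => hfk k).add ((hfk _).const_mul _)).const_mul _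

theorem continuous_xiP (hf : Continuous f) (μ : Measure Circle1) (t : ℝ) :
    Continuous fun x => xiP Tarr f μ n x t :=
  ((continuous_zetaP Tarr n hf t).const_mul _).sub continuous_const

theorem abs_zetaP_le {M : ℝ} (hM : ∀ x, |f x| ≤ M) {s : ℝ} (hs : 0 ≤ s) (x : Circle1) :
    |zetaP Tarr f n x s| ≤ s * M := by
  have hns : 0 ≤ n * s := mul_nonneg n.cast_nonneg hs
  have hM0 : 0 ≤ M := (abs_nonneg _).trans (hM 0)
  have hsum : |∑ k ∈ Finset.range ⌊n * s⌋₊, fnk Tarr f n k x| ≤ ⌊n * s⌋₊ * M :=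
    (Finset.abs_sum_le_sum_abs _ _).trans
      ((Finset.sum_le_card_nsmul _ _ M fun k _ => hM _).trans_eq (by simp))
  have hlast : |Int.fract (n * s) * fnk Tarr f n ⌊n * s⌋₊ x| ≤ Int.fract (n * s) * M := by
    rw [abs_mul, abs_of_nonneg (Int.fract_nonneg _)]
    exact mul_le_mul_of_nonneg_left (hM _) (Int.fract_nonneg _)
  calc |zetaP Tarr f n x s| ≤ (n : ℝ)⁻¹ * (⌊n * s⌋₊ * M + Int.fract (n * s) * M) := by
        rw [zetaP, abs_mul, abs_of_nonneg (inv_nonneg.2 n.cast_nonneg)]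
        gcongr
        exact (abs_add_le _ _).trans (add_le_add hsum hlast)
    _ = (n : ℝ)⁻¹ * n * (s * M) := by
        rw [← add_mul, natCast_floor_eq_intCast_floor hns, Int.floor_add_fract]
        ring
    _ ≤ s * M := mul_le_of_le_one_left (mul_nonneg hs hM0) (inv_mul_le_one (a := (n : ℝ)))

theorem exists_zetaP_sub_eq (f : Circle1 → ℝ) {s t : ℝ} (hs : 0 ≤ s) (hst : s ≤ t) :
    ∃ (b : ℕ → ℝ) (q : ℕ), (∀ i, |b i| ≤ 1) ∧ ∀ x, zetaP Tarr f n x t - zetaP Tarr f n x s =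
      (n : ℝ)⁻¹ * ∑ i ∈ Finset.range q, b i * f (mapIter (Tarr n) (i + ⌊n * s⌋₊) x) := by
  set m := ⌊n * s⌋₊
  have hns : n * s ≤ n * t := by gcongr
  have hmt : m ≤ ⌊n * t⌋₊ := Nat.floor_mono hns
  refine ⟨fun i => rampWeight (n * t) (m + i) - rampWeight (n * s) (m + i), ⌊n * t⌋₊ + 1,
    fun i => ?_, fun x => ?_⟩
  · obtain ⟨ht0, ht1⟩ := rampWeight_mem_Icc (n * t) (m + i)
    obtain ⟨hs0, hs1⟩ := rampWeight_mem_Icc (n * s) (m + i)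
    exact abs_sub_le_of_nonneg_of_le ht0 ht1 hs0 hs1
  rw [zetaP_eq_sum Tarr n f (hs.trans hst) (q := m + (⌊n * t⌋₊ + 1)) (by omega),
    zetaP_eq_sum Tarr n f hs (q := m + (⌊n * t⌋₊ + 1)) (by omega), ← mul_sub,
    ← Finset.sum_sub_distrib, Finset.sum_range_add, Finset.sum_eq_zero, zero_add]
  · simp only [sub_mul, add_comm m]
  · intro k hk
    have hk' := Finset.mem_range.1 hk
    rw [rampWeight_of_lt_floor hk', rampWeight_of_lt_floor (hk'.trans_le hmt), sub_self]

theorem natCast_mul_abs_zetaP_sub_le (hlam : 1 < lam) {M : NNReal} (hf : LipschitzWith M f)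
    (hM : ∀ x, |f x| ≤ M) {s : ℝ} (hs : 0 ≤ s) (x y : ℝ) :
    n * |zetaP Tarr f n x s - zetaP Tarr f n y s| ≤ M * (1 - lam⁻¹)⁻¹ *
      |liftIter (Tarr n) ⌊n * s⌋₊ x - liftIter (Tarr n) ⌊n * s⌋₊ y| := by
  have hlam0 : 0 < lam := zero_lt_one.trans hlam
  set m := ⌊n * s⌋₊
  set w := |liftIter (Tarr n) m x - liftIter (Tarr n) m y|
  set F : ℕ → Circle1 → ℝ := fun k => f ∘ mapIter (Tarr n) k with hF
  have hterm (k : ℕ) (hk : k ∈ Finset.range (m + 1)) :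
      |rampWeight (n * s) k * (F k x - F k y)| ≤ M * w * lam⁻¹ ^ (m - k) := by
    have hkm : k + (m - k) = m := Nat.add_sub_cancel' (Finset.mem_range_succ_iff.1 hk)
    obtain ⟨hw0, hw1⟩ := rampWeight_mem_Icc (n * s) k
    rw [abs_mul, abs_of_nonneg hw0]
    refine (mul_le_of_le_one_left (abs_nonneg _) hw1).trans ?_
    simpa only [hkm] using
      (RegularAt.comp_mapIter hf hM (Tarr n) k).abs_sub_le_mul_inv_pow hlam0 (m - k) x y
  calc n * |zetaP Tarr f n x s - zetaP Tarr f n y s|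
      = n * (n : ℝ)⁻¹ * |∑ k ∈ Finset.range (m + 1), rampWeight (n * s) k * (F k x - F k y)| := by
        rw [zetaP_eq_sum Tarr n f hs m.lt_succ_self, zetaP_eq_sum Tarr n f hs m.lt_succ_self,
          ← mul_sub, ← Finset.sum_sub_distrib, abs_mul, abs_of_nonneg (by positivity), ← mul_assoc]
        simp only [hF, mul_sub, Function.comp_apply]
    _ ≤ ∑ k ∈ Finset.range (m + 1), M * w * lam⁻¹ ^ (m - k) :=
        (mul_le_of_le_one_left (abs_nonneg _) mul_inv_le_one).trans
          ((Finset.abs_sum_le_sum_abs _ _).trans (Finset.sum_le_sum hterm))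
    _ = M * w * ∑ k ∈ Finset.range (m + 1), lam⁻¹ ^ k := by
        rw [← Finset.mul_sum, ← Finset.sum_range_reflect (fun k => lam⁻¹ ^ k)]
        rfl
    _ ≤ M * w * (1 - lam⁻¹)⁻¹ := by
        gcongr
        exact sum_range_pow_le_inv_one_sub (inv_nonneg.2 hlam0.le) (inv_lt_one_of_one_lt₀ hlam) _
    _ = M * (1 - lam⁻¹)⁻¹ * w := by ring

end Birkhoff

section Limits

variable (Tarr : ℕ → ℕ → CM lam Astar) {f : Circle1 → ℝ} {μ : Measure Circle1} {C σ : ℝ}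
  {M : NNReal} {s t : ℝ}

theorem regularAt_of_abs_sub_le_zetaP (n : ℕ) (hlam : 1 < lam) (hf : LipschitzWith M f)
    (hM : ∀ x, |f x| ≤ M) (hs : 0 ≤ s) {g : Circle1 → ℝ} {D : ℝ} (hD : ∀ x, |g x| ≤ D)
    (hg : ∀ x y, |g x - g y| ≤ D * (n * |zetaP Tarr f n x s - zetaP Tarr f n y s|)) :
    RegularAt (Tarr n) ⌊n * s⌋₊ (D * (1 + M * (1 - lam⁻¹)⁻¹)) g := by
  have hD0 : 0 ≤ D := (abs_nonneg _).trans (hD 0)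
  have hinv : 0 ≤ (1 - lam⁻¹)⁻¹ := inv_nonneg.2 (sub_nonneg.2 (inv_le_one_of_one_le₀ hlam.le))
  have hR : 0 ≤ M * (1 - lam⁻¹)⁻¹ := mul_nonneg M.2 hinv
  refine ⟨fun x => (hD x).trans (le_mul_of_one_le_right hD0 (by linarith)), fun x y => ?_⟩
  refine (hg x y).trans ?_
  rw [mul_assoc]
  refine mul_le_mul_of_nonneg_left
    ((natCast_mul_abs_zetaP_sub_le Tarr n hlam hf hM hs x y).trans ?_) hD0
  exact mul_le_mul_of_nonneg_right (by linarith) (abs_nonneg _)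

theorem exists_forall_regularAt_comp_zetaP (hlam : 1 < lam) (hf : LipschitzWith M f)
    (hM : ∀ x, |f x| ≤ M) (hs : 0 ≤ s) {A : ℝ → ℝ} (hA : LocallyLipschitz A) :
    ∃ R, ∀ n : ℕ, RegularAt (Tarr n) ⌊n * s⌋₊ R fun x => A (zetaP Tarr f n x s) := by
  have hζ (n : ℕ) (x : Circle1) : zetaP Tarr f n x s ∈ Icc (-(s * M)) (s * M) :=
    abs_le.1 (abs_zetaP_le Tarr n hM hs x)
  obtain ⟨K, hK⟩ := hA.locallyLipschitzOn.exists_lipschitzOnWith_of_compact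
    (isCompact_Icc (a := -(s * M)) (b := s * M))
  obtain ⟨B, hB⟩ := isCompact_Icc.exists_bound_of_continuousOn hK.continuousOn
  refine ⟨_, fun n => regularAt_of_abs_sub_le_zetaP Tarr n hlam hf hM hs (D := max (K : ℝ) B)
    (fun x => (hB _ (hζ n x)).trans (le_max_right _ _)) fun x y => ?_⟩
  rcases n.eq_zero_or_pos with rfl | hn
  · simp [zetaP]
  · refine (hK.dist_le_mul _ (hζ n x) _ (hζ n y)).trans ?_
    rw [Real.dist_eq]
    gcongr
    · exact le_max_left _ _
    · exact le_mul_of_one_le_left (abs_nonneg _) (Nat.one_le_cast.2 hn)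

theorem exists_forall_regularAt_comp_xiP (hlam : 1 < lam) (hf : LipschitzWith M f)
    (hM : ∀ x, |f x| ≤ M) (hs : 0 ≤ s) {A : ℝ → ℝ} {K : NNReal} (hA : LipschitzWith K A) {B : ℝ}
    (hB : ∀ u, |A u| ≤ B) :
    ∃ R, ∀ n : ℕ, RegularAt (Tarr n) ⌊n * s⌋₊ R fun x => A (xiP Tarr f μ n x s) := by
  refine ⟨_, fun n => regularAt_of_abs_sub_le_zetaP Tarr n hlam hf hM hs (D := max (K : ℝ) B)
    (fun x => (hB _).trans (le_max_right _ _)) fun x y => ?_⟩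
  have hsqrt : √n ≤ n :=
    Real.sqrt_le_iff.2 ⟨n.cast_nonneg, mod_cast Nat.le_self_pow two_ne_zero n⟩
  refine (hA.dist_le_mul _ _).trans ?_
  rw [Real.dist_eq, xiP, xiP, sub_sub_sub_cancel_right, ← mul_sub, abs_mul,
    abs_of_nonneg (Real.sqrt_nonneg _)]
  gcongr
  exact le_max_left _ _

theorem tendsto_covariance_zetaP [IsProbabilityMeasure μ] (hlam : 1 < lam)
    (hf : LipschitzWith M f) (hM : ∀ x, |f x| ≤ M) (hC : 0 ≤ C) (hσ0 : 0 ≤ σ) (hσ1 : σ < 1)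
    (hdec : ∀ n, Decorrelates (Tarr n) μ C σ)
    (hs : 0 ≤ s) (hst : s ≤ t) {A : ℝ → ℝ} (hA : LocallyLipschitz A) :
    Tendsto (fun n : ℕ => cov[fun x => A (zetaP Tarr f n x s),
      fun x => zetaP Tarr f n x t - zetaP Tarr f n x s; μ]) atTop (𝓝 0) := by
  obtain ⟨R, hR⟩ := exists_forall_regularAt_comp_zetaP Tarr hlam hf hM hs hA
  have hbound (n : ℕ) : |cov[fun x => A (zetaP Tarr f n x s),
      fun x => zetaP Tarr f n x t - zetaP Tarr f n x s; μ]| ≤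
        (n : ℝ)⁻¹ * (C * R * M * (1 - σ)⁻¹) := by
    obtain ⟨b, q, hb, hsub⟩ := exists_zetaP_sub_eq Tarr n f hs hst
    simp only [hsub]
    rw [covariance_const_mul_right, abs_mul, abs_of_nonneg (inv_nonneg.2 n.cast_nonneg)]
    exact mul_le_mul_of_nonneg_left ((hdec n).abs_covariance_sum_le hC hσ0 hσ1 (hR n)
      (fun _ => hf.continuous.measurable) (fun _ => hM) hb q) (inv_nonneg.2 n.cast_nonneg)
  refine squeeze_zero_norm hbound ?_
  simpa using tendsto_inv_atTop_nhds_zero_nat.mul_const (C * R * M * (1 - σ)⁻¹)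

theorem exists_xiP_sub_eq [IsFiniteMeasure μ] (n : ℕ) (hf : Continuous f) (hs : 0 ≤ s)
    (hst : s ≤ t) :
    ∃ (b : ℕ → ℝ) (q : ℕ), (∀ i, |b i| ≤ 1) ∧ ∀ x, xiP Tarr f μ n x t - xiP Tarr f μ n x s =
      (√n)⁻¹ * ∑ i ∈ Finset.range q, b i * (f (mapIter (Tarr n) (i + ⌊n * s⌋₊) x) -
        ∫ y, f (mapIter (Tarr n) (i + ⌊n * s⌋₊) y) ∂μ) := by
  obtain ⟨b, q, hb, hsub⟩ := exists_zetaP_sub_eq Tarr n f hs hst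
  refine ⟨b, q, hb, fun x => ?_⟩
  have hInt {g : Circle1 → ℝ} (hg : Continuous g) : Integrable g μ :=
    hg.integrable_of_hasCompactSupport (.of_compactSpace g)
  have hmean : ∫ y, zetaP Tarr f n y t ∂μ - ∫ y, zetaP Tarr f n y s ∂μ =
      (n : ℝ)⁻¹ * ∑ i ∈ Finset.range q, b i * ∫ y, f (mapIter (Tarr n) (i + ⌊n * s⌋₊) y) ∂μ := by
    rw [← integral_sub (hInt (continuous_zetaP Tarr n hf t)) (hInt (continuous_zetaP Tarr n hf s))]
    simp only [hsub]
    have hintf (k : ℕ) : Integrable (fun x => f (mapIter (Tarr n) k x)) μ :=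
      hInt (hf.comp (continuous_mapIter _ k))
    rw [integral_const_mul, integral_finsetSum _ fun i _ => (hintf _).const_mul _]
    simp only [integral_const_mul]
  simp only [xiP, mul_sub, Finset.sum_sub_distrib]
  rw [← Real.sqrt_div_self, div_eq_mul_inv]
  linear_combination √n * hsub x - √n * hmean

theorem integral_sub_integral_comp_mapIter [IsProbabilityMeasure μ] (Ts : ℕ → CM lam Astar)
    (hf : Continuous f) (k : ℕ) :
    ∫ x, (f (mapIter Ts k x) - ∫ y, f (mapIter Ts k y) ∂μ) ∂μ = 0 := by
  have hInt : Integrable (fun x => f (mapIter Ts k x)) μ :=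
    (hf.comp (continuous_mapIter Ts k)).integrable_of_hasCompactSupport (.of_compactSpace _)
  rw [integral_sub hInt (integrable_const _), integral_const, probReal_univ, one_smul, sub_self]

theorem tendsto_covariance_xiP [IsProbabilityMeasure μ] (hlam : 1 < lam)
    (hf : LipschitzWith M f) (hM : ∀ x, |f x| ≤ M) (hC : 0 ≤ C) (hσ0 : 0 ≤ σ) (hσ1 : σ < 1)
    (hdec : ∀ n, Decorrelates (Tarr n) μ C (σ ^ 3))
    (hs : 0 ≤ s) (hst : s ≤ t) {A : ℝ → ℝ} {K : NNReal} (hA : LipschitzWith K A) {B : ℝ}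
    (hB : ∀ u, |A u| ≤ B) {r : ℕ} (hr : r = 1 ∨ r = 2) :
    Tendsto (fun n : ℕ => cov[fun x => A (xiP Tarr f μ n x s),
      fun x => (xiP Tarr f μ n x t - xiP Tarr f μ n x s) ^ r; μ]) atTop (𝓝 0) := by
  obtain ⟨R, hR⟩ := exists_forall_regularAt_comp_xiP (μ := μ) Tarr hlam hf hM hs hA hB
  set N : NNReal := M + M
  set E : ℝ := 3 * (C * R * N ^ r) * ((1 - σ)⁻¹) ^ r
  have hmean (n k : ℕ) : |∫ y, f (mapIter (Tarr n) k y) ∂μ| ≤ M := by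
    simpa using norm_integral_le_of_norm_le_const (f := fun y => f (mapIter (Tarr n) k y))
      (ae_of_all μ fun y => hM (mapIter (Tarr n) k y))
  have hbound (n : ℕ) : |cov[fun x => A (xiP Tarr f μ n x s),
      fun x => (xiP Tarr f μ n x t - xiP Tarr f μ n x s) ^ r; μ]| ≤ ((√n)⁻¹) ^ r * E := by
    obtain ⟨b, q, hb, hsub⟩ := exists_xiP_sub_eq (μ := μ) Tarr n hf.continuous hs hst
    simp only [hsub, mul_pow]
    rw [covariance_const_mul_right, abs_mul, abs_of_nonneg (by positivity)]
    refine mul_le_mul_of_nonneg_left ?_ (by positivity)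
    exact (hdec n).abs_covariance_sum_pow_le hlam.le hC hσ0 hσ1 (hR n)
      (h := fun i x => f x - ∫ y, f (mapIter (Tarr n) (i + ⌊n * s⌋₊) y) ∂μ)
      (fun i => (hf.sub (.const _)).weaken ((add_zero M).trans_le le_self_add))
      (fun i x => (abs_sub _ _).trans (add_le_add (hM x) (hmean n _))) hb
      (fun i => integral_sub_integral_comp_mapIter (Tarr n) hf.continuous _) q hr
  have hsqrt : Tendsto (fun n : ℕ => (√n)⁻¹) atTop (𝓝 0) :=
    tendsto_inv_atTop_zero.comp (Real.tendsto_sqrt_atTop.comp tendsto_natCast_atTop_atTop)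
  refine squeeze_zero_norm hbound ?_
  have hr0 : r ≠ 0 := by omega
  simpa [hr0] using (hsqrt.pow r).mul_const E

end Limits

theorem exists_lipschitzWith_and_abs_le {X : Type*} [PseudoMetricSpace X] [CompactSpace X]
    {f : X → ℝ} (hf : ∃ K, LipschitzWith K f) :
    ∃ M : NNReal, LipschitzWith M f ∧ ∀ x, |f x| ≤ M := by
  obtain ⟨K, hK⟩ := hf
  obtain ⟨B, hB⟩ := isCompact_univ.exists_bound_of_continuousOn hK.continuous.continuousOn
  exact ⟨max K B.toNNReal, hK.weaken (le_max_left _ _), fun x => (hB x (mem_univ x)).trans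
    ((Real.le_coe_toNNReal B).trans (NNReal.coe_le_coe.2 (le_max_right _ _)))⟩

theorem integral_mul_sub_eq_covariance {ρ : Circle1 → ℝ} (hρ : IsProbDensity ρ)
    {X Y : Circle1 → ℝ} (hX : Continuous X) (hY : Continuous Y) :
    (∫ x, X x * Y x * ρ x) - (∫ x, X x * ρ x) * ∫ x, Y x * ρ x = cov[X, Y; densityMeasure ρ] := by
  have := isProbabilityMeasure_densityMeasure hρ
  have hL {g : Circle1 → ℝ} (hg : Continuous g) : MemLp g 2 (densityMeasure ρ) :=
    hg.memLp_of_hasCompactSupport (.of_compactSpace g)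
  simp only [← integral_densityMeasure hρ]
  exact (covariance_eq_sub (hL hX) (hL hY)).symm

theorem xiD_eq_xiP {ρ : Circle1 → ℝ} (hρ : IsProbDensity ρ) (Tarr : ℕ → ℕ → CM lam Astar)
    (f : Circle1 → ℝ) :
    xiD Tarr f ρ = xiP Tarr f (densityMeasure ρ) := by
  funext n x t
  rw [xiD, xiP, zetaMean, integral_densityMeasure hρ]

theorem statement13_general (hlam : 1 < lam) (Tarr : ℕ → ℕ → CM lam Astar) (f : Circle1 → ℝ)
    (hf : ∃ K : NNReal, LipschitzWith K f) {L : ℝ} (ρ : Circle1 → ℝ) (hρ : memD L ρ) {s t : ℝ}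
    (hs : 0 ≤ s) (hst : s ≤ t) :
    (∀ A : ℝ → ℝ, LocallyLipschitz A →
      Tendsto (fun n : ℕ =>
          (∫ x, A (zetaP Tarr f n x s) * (zetaP Tarr f n x t - zetaP Tarr f n x s) * ρ x) -
          (∫ x, A (zetaP Tarr f n x s) * ρ x) *
          (∫ x, (zetaP Tarr f n x t - zetaP Tarr f n x s) * ρ x))
        atTop (𝓝 0)) ∧
    (∀ A : ℝ → ℝ, (∃ K, LipschitzWith K A) → (∃ B, ∀ u, |A u| ≤ B) → ∀ q : ℕ, q = 1 ∨ q = 2 →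
      Tendsto (fun n : ℕ =>
          (∫ x, A (xiD Tarr f ρ n x s) * (xiD Tarr f ρ n x t - xiD Tarr f ρ n x s) ^ q * ρ x) -
          (∫ x, A (xiD Tarr f ρ n x s) * ρ x) *
          (∫ x, (xiD Tarr f ρ n x t - xiD Tarr f ρ n x s) ^ q * ρ x))
        atTop (𝓝 0)) := by
  have := isProbabilityMeasure_densityMeasure hρ.1
  obtain ⟨σ, ⟨hσ0, hσ1⟩, hdec⟩ := hρ.exists_decorrelates hlam (Tarr 0 0).Astar_nonneg
  obtain ⟨M, hfM, hM⟩ := exists_lipschitzWith_and_abs_le hf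
  have hζ := fun n r => continuous_zetaP Tarr n hfM.continuous r
  have hξ := fun n r => continuous_xiP Tarr n hfM.continuous (densityMeasure ρ) r
  refine ⟨fun A hA => ?_, fun A ⟨K, hA⟩ ⟨B, hB⟩ q hq => ?_⟩
  · exact (tendsto_covariance_zetaP Tarr hlam hfM hM (by norm_num) (pow_nonneg hσ0.le 3)
      (pow_lt_one₀ hσ0.le hσ1 three_ne_zero) (fun n => hdec (Tarr n)) hs hst hA).congr fun n =>
        (integral_mul_sub_eq_covariance hρ.1 (hA.continuous.comp (hζ n s))
          ((hζ n t).sub (hζ n s))).symm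
  · rw [xiD_eq_xiP hρ.1]
    exact (tendsto_covariance_xiP Tarr hlam hfM hM (by norm_num) hσ0.le hσ1
      (fun n => hdec (Tarr n)) hs hst hA hB hq).congr fun n =>
        (integral_mul_sub_eq_covariance hρ.1 (hA.continuous.comp (hξ n s))
          (((hξ n t).sub (hξ n s)).pow q)).symm

end Decorrelation

/-- Lemma `lem:dec_moments`.  Decorrelation at the process level: for an
initial density `ρ ∈ 𝒟_L` and `0 ≤ s ≤ t ≤ 1`,
(i) for `A ∈ C^∞(ℝ)`, `μ[A(ζₙ(s))(ζₙ(t) − ζₙ(s))] − μ[A(ζₙ(s))]·μ[ζₙ(t) − ζₙ(s)] → 0`, and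
(ii) for `A ∈ C_c^∞(ℝ)` and `q ∈ {1,2}`,
`μ[A(ξₙ(s))(ξₙ(t) − ξₙ(s))^q] − μ[A(ξₙ(s))]·μ[(ξₙ(t) − ξₙ(s))^q] → 0` as `n → ∞`. -/
theorem statement13 {lam Astar : ℝ} (hlam : 1 < lam) (hA : 0 < Astar)
    {η : ℝ} (hη : η ∈ Set.Ioo (0 : ℝ) 1)
    (γ : ℝ → CM lam Astar) (hγ : HolderCurve η γ)
    (Tarr : ℕ → ℕ → CM lam Astar) (hT : ArrayApprox η γ Tarr)
    (f : Circle1 → ℝ) (hf : ∃ K : NNReal, LipschitzWith K f)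
    (L : ℝ) (hL : 0 < L) (ρ : Circle1 → ℝ) (hρ : memD L ρ)
    (s t : ℝ) (hs : s ∈ Set.Icc (0 : ℝ) 1) (ht : t ∈ Set.Icc (0 : ℝ) 1) (hst : s ≤ t) :
    (∀ A : ℝ → ℝ, ContDiff ℝ (⊤ : ℕ∞) A →
      Tendsto (fun n : ℕ =>
          (∫ x : Circle1, A (zetaP Tarr f n x s) * (zetaP Tarr f n x t - zetaP Tarr f n x s) * ρ x) -
          (∫ x : Circle1, A (zetaP Tarr f n x s) * ρ x) *
          (∫ x : Circle1, (zetaP Tarr f n x t - zetaP Tarr f n x s) * ρ x))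
        atTop (𝓝 0)) ∧
    (∀ A : ℝ → ℝ, ContDiff ℝ (⊤ : ℕ∞) A → HasCompactSupport A → ∀ q : ℕ, q = 1 ∨ q = 2 →
      Tendsto (fun n : ℕ =>
          (∫ x : Circle1, A (xiD Tarr f ρ n x s) * (xiD Tarr f ρ n x t - xiD Tarr f ρ n x s) ^ q * ρ x) -
          (∫ x : Circle1, A (xiD Tarr f ρ n x s) * ρ x) *
          (∫ x : Circle1, (xiD Tarr f ρ n x t - xiD Tarr f ρ n x s) ^ q * ρ x))
        atTop (𝓝 0)) := by
  have h := statement13_general hlam Tarr f hf ρ hρ hs.1 hst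
  refine ⟨fun A hA => h.1 A (hA.of_le (by simp)).locallyLipschitz, fun A hA hA' => h.2 A ?_ ?_⟩
  · exact hA.lipschitzWith_of_hasCompactSupport hA' (by simp)
  · exact hA'.exists_bound_of_continuous hA.continuous
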